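/- Let $\mathbb H$ be the Heisenberg group, i.e. $\mathbb R^3$ with the product $(x_1,y_1,t_1)\star(x_2,y_2,t_2)=(x_1+x_2,\,y_1+y_2,\,t_1+t_2+2(x_2y_1-x_1y_2))$, the Korányi norm $\|(x,y,t)\|=((x^2+y^2)^2+t^2)^{1/4}$, the metric $d(p,q)=\|q^{-1}\star p\|$ with open balls $B(p,r)$, and Lebesgue measure $m$, $|E|=m(E)$. A homeomorphism $f:\mathbb H\to\mathbb H$ is called quasiconformal if $$H_f(p)=\limsup_{r\to0}\frac{\sup_{d(p,q)\le r}d(f(p),f(q))}{\inf_{d(p,q)\ge r}d(f(p),f(q))}\in[0,\infty]$$ is bounded on $\mathbb H$ by a finite constant, and its Jacobian is $J_f(p)=\limsup_{r\to0}|f(B(p,r))|/|B(p,r)|\in[0,\infty]$. Suppose $(f_k)_{k\in\mathbb N}$ is a sequence of quasiconformal mappings of $\mathbb H$ converging locally uniformly (with respect to $d$) to a quasiconformal mapping $f$ of $\mathbb H$, and suppose the inverses $f_k^{-1}$ converge pointwise to $f^{-1}$. Then for every $\xi\in C_0^\infty(\mathbb R^3)$ (smooth with compact support) with $\xi\ge0$,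 the functions $J_{f_k}$ and $J_f$ are Lebesgue measurable, the integrals $\int\xi J_{f_k}\,dm$ and $\int\xi J_f\,dm$ are finite, and $$\lim_{k\to\infty}\int\xi\,J_{f_k}\,dm=\int\xi\,J_f\,dm .$$ -/

import Mathlib

open MeasureTheory Filter Set Topology
open scoped ENNReal NNReal ContDiff

noncomputable section

/-- The underlying set of the Heisenberg group: ℝ³, with its usual topology (which is also the
topology of the Korányi metric `Heis.d`), smooth structure and Lebesgue measure `volume`. -/
abbrev HG : Type := ℝ × ℝ × ℝ

namespace Heis

/-- Heisenberg group product. -/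
def mul (p q : HG) : HG :=
  (p.1 + q.1, p.2.1 + q.2.1, p.2.2 + q.2.2 + 2 * (q.1 * p.2.1 - p.1 * q.2.1))

/-- Heisenberg group inverse. -/
def inv (p : HG) : HG := (-p.1, -p.2.1, -p.2.2)

/-- Korányi norm. -/
def knorm (p : HG) : ℝ := ((p.1 ^ 2 + p.2.1 ^ 2) ^ 2 + p.2.2 ^ 2) ^ ((1 : ℝ) / 4)

/-- Korányi metric d(p,q) = ‖q⁻¹⋆p‖. -/
def d (p q : HG) : ℝ := knorm (mul (inv q) p)

/-- Open ball for the Korányi metric. -/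
def ball (p : HG) (r : ℝ) : Set HG := {q | d p q < r}

/-- Dilatation H_f(p), with values in [0,∞]: an infinite upper limit has the value `⊤`.
For a homeomorphism and `r > 0` the numerator is finite and the denominator is
positive and finite. -/
def dilat (f : HG → HG) (p : HG) : ℝ≥0∞ :=
  limsup (fun r : ℝ =>
      (⨆ q ∈ {q | d p q ≤ r}, ENNReal.ofReal (d (f p) (f q))) /
        (⨅ q ∈ {q | r ≤ d p q}, ENNReal.ofReal (d (f p) (f q))))
    (𝓝[>] 0)

/-- A homeomorphism of ℍ is quasiconformal if its dilatation is bounded by a finite constant. -/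
def IsQC (f : HG ≃ₜ HG) : Prop := ∃ M : ℝ≥0, ∀ p, dilat f p ≤ M

/-- Jacobian (upper volume derivative), with values in [0,∞]. -/
def jac (f : HG → HG) (p : HG) : ℝ≥0∞ :=
  limsup (fun r : ℝ => volume (f '' ball p r) / volume (ball p r)) (𝓝[>] 0)

/-- Locally uniform convergence with respect to the Korányi metric: uniform on every
compact set (ℍ is locally compact). -/
def ConvLocUnif (fs : ℕ → HG → HG) (f : HG → HG) : Prop :=
  ∀ K : Set HG, IsCompact K → ∀ ε > 0, ∀ᶠ m in atTop, ∀ p ∈ K, d (fs m p) (f p) < ε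

end Heis

end

open MeasureTheory Filter Set Topology
open scoped ENNReal NNReal ContDiff

noncomputable section

/-- The Heisenberg group, carrying the Korányi metric (the type `HG` itself carries the
product metric of `ℝ × ℝ × ℝ`). -/
def KH : Type := HG

namespace KH

instance : TopologicalSpace KH := inferInstanceAs (TopologicalSpace HG)
instance : MeasureSpace KH := inferInstanceAs (MeasureSpace HG)
instance : BorelSpace KH := inferInstanceAs (BorelSpace HG)
instance : SecondCountableTopology KH := inferInstanceAs (SecondCountableTopology HG)
instance : SFinite (volume : Measure KH) := inferInstanceAs (SFinite (volume : Measure HG))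
instance : IsLocallyFiniteMeasure (volume : Measure KH) :=
  inferInstanceAs (IsLocallyFiniteMeasure (volume : Measure HG))
instance : Measure.IsOpenPosMeasure (volume : Measure KH) :=
  inferInstanceAs (Measure.IsOpenPosMeasure (volume : Measure HG))

/-- The point with given coordinates. -/
def mk (x y t : ℝ) : KH := (x, y, t)

/-- The first coordinate. -/
def x (p : KH) : ℝ := Prod.fst p
/-- The second coordinate. -/
def y (p : KH) : ℝ := (Prod.snd p).1
/-- The third coordinate. -/
def t (p : KH) : ℝ := (Prod.snd p).2

@[simp] lemma mk_x (a b c : ℝ) : (mk a b c).x = a := rfl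
@[simp] lemma mk_y (a b c : ℝ) : (mk a b c).y = b := rfl
@[simp] lemma mk_t (a b c : ℝ) : (mk a b c).t = c := rfl

@[ext] lemma ext {p q : KH} (hx : p.x = q.x) (hy : p.y = q.y) (ht : p.t = q.t) : p = q :=
  Prod.ext hx (Prod.ext hy ht)

lemma continuous_x : Continuous x := continuous_fst (X := ℝ) (Y := ℝ × ℝ)
lemma continuous_y : Continuous y :=
  (continuous_fst.comp continuous_snd : Continuous fun p : ℝ × ℝ × ℝ => p.2.1)
lemma continuous_t : Continuous t :=
  (continuous_snd.comp continuous_snd : Continuous fun p : ℝ × ℝ × ℝ => p.2.2)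

lemma continuous_mk {Y : Type*} [TopologicalSpace Y] {f g h : Y → ℝ} (hf : Continuous f)
    (hg : Continuous g) (hh : Continuous h) : Continuous fun s => mk (f s) (g s) (h s) :=
  (hf.prodMk (hg.prodMk hh) : Continuous fun s => ((f s, g s, h s) : ℝ × ℝ × ℝ))

instance : Mul KH := ⟨Heis.mul⟩
instance : Inv KH := ⟨Heis.inv⟩
instance : One KH := ⟨mk 0 0 0⟩

@[simp] lemma mul_x (p q : KH) : (p * q).x = p.x + q.x := rfl
@[simp] lemma mul_y (p q : KH) : (p * q).y = p.y + q.y := rfl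
@[simp] lemma mul_t (p q : KH) :
    (p * q).t = p.t + q.t + 2 * (q.x * p.y - p.x * q.y) := rfl
@[simp] lemma inv_x (p : KH) : (p⁻¹).x = -p.x := rfl
@[simp] lemma inv_y (p : KH) : (p⁻¹).y = -p.y := rfl
@[simp] lemma inv_t (p : KH) : (p⁻¹).t = -p.t := rfl
@[simp] lemma one_x : (1 : KH).x = 0 := rfl
@[simp] lemma one_y : (1 : KH).y = 0 := rfl
@[simp] lemma one_t : (1 : KH).t = 0 := rfl

instance : Group KH := Group.ofLeftAxioms
  (by intro a b c; ext <;> simp <;> ring)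
  (by intro a; ext <;> simp)
  (by intro a; ext <;> simp [mul_comm])

/-- The Korányi norm. -/
def kn (p : KH) : ℝ := Heis.knorm p

lemma kn_def (p : KH) : kn p = ((p.x ^ 2 + p.y ^ 2) ^ 2 + p.t ^ 2) ^ ((1 : ℝ) / 4) := rfl

lemma kn_nonneg (p : KH) : 0 ≤ kn p := by rw [kn_def]; positivity

lemma kn_pow (p : KH) : kn p ^ 4 = (p.x ^ 2 + p.y ^ 2) ^ 2 + p.t ^ 2 := by
  rw [kn_def, ← Real.rpow_natCast, ← Real.rpow_mul (by positivity)]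
  norm_num

lemma kn_inv (p : KH) : kn p⁻¹ = kn p := by simp [kn_def]

lemma sq_add_sq_le_kn (p : KH) : p.x ^ 2 + p.y ^ 2 ≤ kn p ^ 2 := by
  refine abs_le_of_sq_le_sq' ?_ (sq_nonneg _) |>.2
  have := kn_pow p
  nlinarith [sq_nonneg p.t]

lemma abs_t_le_kn (p : KH) : |p.t| ≤ kn p ^ 2 := by
  refine abs_le_of_sq_le_sq ?_ (sq_nonneg _)
  have := kn_pow p
  nlinarith [sq_nonneg (p.x ^ 2 + p.y ^ 2)]

lemma abs_x_le_kn (p : KH) : |p.x| ≤ kn p :=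
  abs_le_of_sq_le_sq (by nlinarith [sq_add_sq_le_kn p, sq_nonneg p.y]) (kn_nonneg p)

lemma abs_y_le_kn (p : KH) : |p.y| ≤ kn p :=
  abs_le_of_sq_le_sq (by nlinarith [sq_add_sq_le_kn p, sq_nonneg p.x]) (kn_nonneg p)

lemma kn_mul_le (p q : KH) : kn (p * q) ≤ kn p + kn q := by
  have hp := kn_nonneg p
  have hq := kn_nonneg q
  have h4 : kn (p * q) ^ 4 ≤ (kn p + kn q) ^ 4 := by
    have key : ∀ (z : KH), kn z ^ 2 = ‖(⟨z.x ^ 2 + z.y ^ 2, z.t⟩ : ℂ)‖ := by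
      intro z
      rw [← Real.sqrt_sq (sq_nonneg (kn z)), Complex.norm_def, Complex.normSq_mk]
      congr 1
      linear_combination kn_pow z
    have hC : ‖(⟨p.x * q.x + p.y * q.y, q.x * p.y - p.x * q.y⟩ : ℂ)‖ ≤ kn p * kn q := by
      rw [Complex.norm_def, Complex.normSq_mk]
      apply Real.sqrt_le_iff.2 ⟨by positivity, ?_⟩
      have := mul_le_mul (sq_add_sq_le_kn p) (sq_add_sq_le_kn q) (by positivity) (by positivity)
      nlinarith
    have h2 : kn (p * q) ^ 2 ≤ (kn p + kn q) ^ 2 := by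
      rw [key]
      have e : (⟨(p * q).x ^ 2 + (p * q).y ^ 2, (p * q).t⟩ : ℂ) =
          ⟨p.x ^ 2 + p.y ^ 2, p.t⟩ + ⟨q.x ^ 2 + q.y ^ 2, q.t⟩ +
            (2 : ℝ) • ⟨p.x * q.x + p.y * q.y, q.x * p.y - p.x * q.y⟩ := by
        apply Complex.ext
        · simp; ring
        · simp
      rw [e]
      refine (norm_add_le _ _).trans ((add_le_add (norm_add_le _ _) le_rfl).trans ?_)
      rw [← key, ← key, norm_smul]
      norm_num
      nlinarith
    nlinarith [sq_nonneg (kn (p * q)), sq_nonneg (kn p + kn q)]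
  exact le_of_pow_le_pow_left₀ (by norm_num) (by positivity) h4

lemma kn_eq_zero {p : KH} (h : kn p = 0) : p = 1 := by
  have h1 := abs_x_le_kn p
  have h2 := abs_y_le_kn p
  have h3 := abs_t_le_kn p
  rw [h] at h1 h2 h3
  ext
  · simpa using h1
  · simpa using h2
  · simpa using h3

@[simp] lemma kn_one : kn 1 = 0 := by simp [kn_def]

lemma continuous_kn : Continuous kn := by
  unfold kn Heis.knorm
  exact Continuous.rpow_const
    (((((continuous_x.pow 2).add (continuous_y.pow 2)).pow 2).add (continuous_t.pow 2)) :
      Continuous fun p : KH => (p.x ^ 2 + p.y ^ 2) ^ 2 + p.t ^ 2) (by intro; right; norm_num)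

lemma continuous_mul' : Continuous fun pq : KH × KH => pq.1 * pq.2 := by
  have a := continuous_x.comp (continuous_fst (X := KH) (Y := KH))
  have b := continuous_y.comp (continuous_fst (X := KH) (Y := KH))
  have c := continuous_t.comp (continuous_fst (X := KH) (Y := KH))
  have a' := continuous_x.comp (continuous_snd (X := KH) (Y := KH))
  have b' := continuous_y.comp (continuous_snd (X := KH) (Y := KH))
  have c' := continuous_t.comp (continuous_snd (X := KH) (Y := KH))
  exact continuous_mk (a.add a') (b.add b')
    ((c.add c').add (((a'.mul b).sub (a.mul b')).const_mul 2))

instance : ContinuousMul KH := ⟨continuous_mul'⟩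
instance : ContinuousInv KH :=
  ⟨continuous_mk continuous_x.neg continuous_y.neg continuous_t.neg⟩
instance : IsTopologicalGroup KH where

/-- The Korányi metric, before its topology is identified with the one of `ℝ³`. -/
abbrev preMetric : PseudoMetricSpace KH where
  dist p q := kn (q⁻¹ * p)
  dist_self p := by simp
  dist_comm p q := by rw [← kn_inv]; simp
  dist_triangle p q r := by
    have : r⁻¹ * p = (r⁻¹ * q) * (q⁻¹ * p) := by group
    rw [this, add_comm]
    exact kn_mul_le _ _

lemma preMetric_topology :
    (inferInstance : TopologicalSpace KH) = preMetric.toUniformSpace.toTopologicalSpace := by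
  refine TopologicalSpace.ext_nhds fun p => ?_
  have hn : @nhds KH preMetric.toUniformSpace.toTopologicalSpace p =
      comap (fun q : KH => kn (p⁻¹ * q)) (𝓝 0) :=
    (@nhds_comap_dist KH preMetric p).symm
  rw [hn]
  apply le_antisymm
  · rw [← tendsto_iff_comap]
    have : Continuous fun q : KH => kn (p⁻¹ * q) := continuous_kn.comp (continuous_const_mul _)
    simpa using this.tendsto p
  · set F := comap (fun q : KH => kn (p⁻¹ * q)) (𝓝 0)
    have h0 : Tendsto (fun q : KH => kn (p⁻¹ * q)) F (𝓝 0) := tendsto_comap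
    have h1 : Tendsto (fun q : KH => (p⁻¹ * q).x) F (𝓝 0) :=
      squeeze_zero_norm (fun q => abs_x_le_kn _) h0
    have h2 : Tendsto (fun q : KH => (p⁻¹ * q).y) F (𝓝 0) :=
      squeeze_zero_norm (fun q => abs_y_le_kn _) h0
    have h3 : Tendsto (fun q : KH => (p⁻¹ * q).t) F (𝓝 0) :=
      squeeze_zero_norm (fun q => abs_t_le_kn _) (by simpa using h0.pow 2)
    have h4 : Tendsto (fun q : KH => p⁻¹ * q) F (𝓝 1) :=
      (h1.prodMk_nhds (h2.prodMk_nhds h3) :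
        Tendsto (fun q : KH => (((p⁻¹ * q).x, (p⁻¹ * q).y, (p⁻¹ * q).t) : ℝ × ℝ × ℝ)) F
          (𝓝 ((0, 0, 0) : ℝ × ℝ × ℝ)))
    have h5 : Tendsto (fun q : KH => p * (p⁻¹ * q)) F (𝓝 (p * 1)) := h4.const_mul p
    simp only [mul_inv_cancel_left, mul_one] at h5
    exact h5

instance : PseudoMetricSpace KH := preMetric.replaceTopology preMetric_topology

lemma dist_def (p q : KH) : dist p q = kn (q⁻¹ * p) := rfl

instance : MetricSpace KH where
  eq_of_dist_eq_zero {p q} h := by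
    have := kn_eq_zero h
    rw [inv_mul_eq_one] at this
    exact this.symm

lemma dist_mul_left' (a p q : KH) : dist (a * p) (a * q) = dist p q := by
  simp only [dist_def]; congr 1; group

lemma dist_one (p : KH) : dist 1 p = kn p := by rw [dist_comm, dist_def]; simp

lemma dist_mul_self (p q : KH) : dist p (p * q) = kn q := by
  rw [dist_comm, dist_def]; simp

/-- Dilations. -/
def dil (r : ℝ) (p : KH) : KH := mk (r * p.x) (r * p.y) (r ^ 2 * p.t)

lemma kn_dil {r : ℝ} (hr : 0 ≤ r) (p : KH) : kn (dil r p) = r * kn p := by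
  refine (pow_left_inj₀ (kn_nonneg _) (mul_nonneg hr (kn_nonneg _)) (n := 4) (by norm_num)).1 ?_
  rw [mul_pow, kn_pow, kn_pow]; simp [dil]; ring

lemma dil_one (p : KH) : dil 1 p = p := by ext <;> simp [dil]
lemma dil_zero (p : KH) : dil 0 p = 1 := by ext <;> simp [dil]

lemma continuous_dil (p : KH) : Continuous fun r : ℝ => dil r p :=
  continuous_mk (continuous_id.mul continuous_const) (continuous_id.mul continuous_const)
    ((continuous_id.pow 2).mul continuous_const)

instance : ProperSpace KH := by
  refine ⟨fun p r => ?_⟩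
  have hK : IsCompact ((Icc (-r) r ×ˢ (Icc (-r) r ×ˢ Icc (-r ^ 2) (r ^ 2)) : Set HG)) :=
    isCompact_Icc.prod (isCompact_Icc.prod isCompact_Icc)
  have hK' : IsCompact ((fun q : KH => p * q) ''
      (Icc (-r) r ×ˢ (Icc (-r) r ×ˢ Icc (-r ^ 2) (r ^ 2)) : Set HG)) :=
    IsCompact.image (X := KH) hK (continuous_const_mul p)
  refine hK'.of_isClosed_subset Metric.isClosed_closedBall fun q hq => ?_
  rw [Metric.mem_closedBall, dist_def] at hq
  refine ⟨p⁻¹ * q, ?_, by simp⟩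
  have h1 := abs_le.1 ((abs_x_le_kn (p⁻¹ * q)).trans hq)
  have h2 := abs_le.1 ((abs_y_le_kn (p⁻¹ * q)).trans hq)
  have h3 := abs_le.1 ((abs_t_le_kn (p⁻¹ * q)).trans (pow_le_pow_left₀ (kn_nonneg _) hq 2))
  exact ⟨h1, h2, h3⟩

lemma measurePreserving_affine (a b c k₁ k₂ : ℝ) :
    MeasurePreserving (fun p : KH => mk (a + p.x) (b + p.y) (c + (k₁ * p.x + k₂ * p.y) + p.t)) := by
  have h1 : ∀ s : ℝ, MeasurePreserving (fun q : ℝ × ℝ => (b + q.1, c + (k₁ * s + k₂ * q.1) + q.2))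
      volume volume := by
    intro s
    refine MeasurePreserving.skew_product (g := fun y t => c + (k₁ * s + k₂ * y) + t)
      (measurePreserving_add_left volume b) (by unfold Function.uncurry; fun_prop) ?_
    exact ae_of_all _ fun y => (measurePreserving_add_left volume _).map_eq
  exact MeasurePreserving.skew_product (μa := (volume : Measure ℝ)) (μb := (volume : Measure ℝ))
    (μc := (volume : Measure (ℝ × ℝ))) (μd := (volume : Measure (ℝ × ℝ)))
    (g := fun s (q : ℝ × ℝ) => (b + q.1, c + (k₁ * s + k₂ * q.1) + q.2))
    (measurePreserving_add_left volume a) (by unfold Function.uncurry; fun_prop)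
    (ae_of_all _ fun s => (h1 s).map_eq)

instance : (volume : Measure KH).IsMulLeftInvariant := ⟨fun p => by
  convert (measurePreserving_affine p.x p.y p.t (2 * p.y) (-2 * p.x)).map_eq using 2
  ext q : 1
  ext <;> simp; ring⟩

instance : (volume : Measure KH).IsMulRightInvariant := ⟨fun p => by
  convert (measurePreserving_affine p.x p.y p.t (-2 * p.y) (2 * p.x)).map_eq using 2
  ext q : 1
  ext <;> simp <;> ring⟩

lemma volume_dil_preimage {r : ℝ} (hr : 0 < r) (s : Set KH) :
    volume (dil r ⁻¹' s) = ENNReal.ofReal ((r ^ 4)⁻¹) * volume s := by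
  let g : HG →ₗ[ℝ] HG := LinearMap.prodMap (r • LinearMap.id)
    (LinearMap.prodMap (r • LinearMap.id) (r ^ 2 • LinearMap.id))
  have hg : LinearMap.det g = r ^ 4 := by
    simp only [g, LinearMap.det_prodMap, LinearMap.det_smul]
    simp; ring
  have : (volume : Measure (ℝ × ℝ)).IsAddHaarMeasure :=
    inferInstanceAs ((volume : Measure ℝ).prod (volume : Measure ℝ)).IsAddHaarMeasure
  have : (volume : Measure HG).IsAddHaarMeasure :=
    inferInstanceAs ((volume : Measure ℝ).prod (volume : Measure (ℝ × ℝ))).IsAddHaarMeasure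
  have := Measure.addHaar_preimage_linearMap (volume : Measure HG) (f := g) (by rw [hg]; positivity) s
  rw [hg, abs_of_pos (by positivity)] at this
  exact this

/-- The volume of the unit ball. -/
def c0 : ℝ≥0∞ := volume (Metric.ball (1 : KH) 1)

lemma c0_pos : 0 < c0 := Metric.measure_ball_pos _ _ one_pos

lemma c0_lt_top : c0 < ⊤ :=
  measure_ball_lt_top

lemma volume_ball (p : KH) {r : ℝ} (hr : 0 ≤ r) :
    volume (Metric.ball p r) = ENNReal.ofReal (r ^ 4) * c0 := by
  rcases hr.eq_or_lt with rfl | hr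
  · simp
  have h1 : Metric.ball p r = (fun q => p⁻¹ * q) ⁻¹' (dil r⁻¹ ⁻¹' Metric.ball 1 1) := by
    ext q
    simp only [mem_preimage, Metric.mem_ball']
    rw [dist_one, kn_dil (by positivity), dist_comm, dist_def, inv_mul_lt_iff₀ hr, mul_one]
  rw [h1, measure_preimage_mul, volume_dil_preimage (by positivity)]
  simp [c0]

lemma volume_closedBall (p : KH) {r : ℝ} (hr : 0 ≤ r) :
    volume (Metric.closedBall p r) = ENNReal.ofReal (r ^ 4) * c0 := by
  apply le_antisymm
  · have : Tendsto (fun s : ℝ => ENNReal.ofReal (s ^ 4) * c0) (𝓝[>] r)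
        (𝓝 (ENNReal.ofReal (r ^ 4) * c0)) := by
      refine ENNReal.Tendsto.mul_const ?_ (Or.inr c0_lt_top.ne)
      exact (ENNReal.continuous_ofReal.tendsto _).comp
        (((continuous_pow 4).tendsto r).mono_left nhdsWithin_le_nhds)
    refine ge_of_tendsto this ?_
    filter_upwards [self_mem_nhdsWithin] with s hs
    rw [← volume_ball p (hr.trans (le_of_lt hs))]
    exact measure_mono (Metric.closedBall_subset_ball hs)
  · rw [← volume_ball p hr]
    exact measure_mono Metric.ball_subset_closedBall

instance : IsUnifLocDoublingMeasure (volume : Measure KH) := ⟨⟨16, by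
  filter_upwards [self_mem_nhdsWithin] with r hr x
  have hr : (0 : ℝ) < r := hr
  rw [volume_closedBall x hr.le, volume_closedBall x (by positivity), mul_pow,
    ENNReal.ofReal_mul (by positivity), ← mul_assoc]
  gcongr
  norm_num⟩⟩

/-- `z` is reached from the identity, within time `T`, by a curve of speed at most one. -/
def Reach (z : KH) (T : ℝ) : Prop :=
  ∃ γ : ℝ → KH, LipschitzWith 1 γ ∧ γ 0 = 1 ∧ ∀ t, T ≤ t → γ t = z

lemma Reach.mono {z : KH} {S T : ℝ} (h : Reach z S) (hST : S ≤ T) : Reach z T := by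
  obtain ⟨γ, h1, h2, h3⟩ := h
  exact ⟨γ, h1, h2, fun t ht => h3 t (hST.trans ht)⟩

lemma exists_lipschitz_ramp (a : ℝ) :
    ∃ φ : ℝ → ℝ, LipschitzWith 1 φ ∧ φ 0 = 0 ∧ ∀ t, |a| ≤ t → φ t = a := by
  have h1 : LipschitzWith 1 fun t : ℝ => max (min t |a|) 0 :=
    (LipschitzWith.id.min_const _).max_const _
  rcases le_total 0 a with ha | ha
  · refine ⟨_, h1, by simp, fun t ht => ?_⟩
    simp only [min_eq_right ht]
    simp [abs_of_nonneg ha, ha]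
  · refine ⟨fun t => -max (min t |a|) 0, h1.neg, by simp, fun t ht => ?_⟩
    simp only [min_eq_right ht]
    simp [abs_of_nonpos ha, ha]

lemma Reach.xAxis (a : ℝ) : Reach (mk a 0 0) |a| := by
  obtain ⟨φ, h1, h2, h3⟩ := exists_lipschitz_ramp a
  refine ⟨fun t => mk (φ t) 0 0, LipschitzWith.of_dist_le_mul fun s t => ?_, ?_, fun t ht => ?_⟩
  · refine le_trans (le_of_eq ?_) (h1.dist_le_mul s t)
    refine (pow_left_inj₀ dist_nonneg dist_nonneg (n := 4) (by norm_num)).1 ?_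
    rw [dist_def, kn_pow, Real.dist_eq, Even.pow_abs ⟨2, rfl⟩]
    simp; ring
  · simp only [h2]; rfl
  · simp only [h3 t ht]

lemma Reach.yAxis (a : ℝ) : Reach (mk 0 a 0) |a| := by
  obtain ⟨φ, h1, h2, h3⟩ := exists_lipschitz_ramp a
  refine ⟨fun t => mk 0 (φ t) 0, LipschitzWith.of_dist_le_mul fun s t => ?_, ?_, fun t ht => ?_⟩
  · refine le_trans (le_of_eq ?_) (h1.dist_le_mul s t)
    refine (pow_left_inj₀ dist_nonneg dist_nonneg (n := 4) (by norm_num)).1 ?_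
    rw [dist_def, kn_pow, Real.dist_eq, Even.pow_abs ⟨2, rfl⟩]
    simp; ring
  · simp only [h2]; rfl
  · simp only [h3 t ht]

lemma Reach.mul {z w : KH} {S T : ℝ} (hz : Reach z S) (hw : Reach w T) (hS : 0 ≤ S)
    (hT : 0 ≤ T) :
    Reach (z * w) (S + T) := by
  obtain ⟨γ, h1, h2, h3⟩ := hz
  obtain ⟨η, g1, g2, g3⟩ := hw
  rw [lipschitzWith_iff_dist_le_mul] at h1 g1
  simp only [NNReal.coe_one, one_mul, Real.dist_eq] at h1 g1
  have key : ∀ s t, s ≤ t → dist (γ (min s S) * η (max (s - S) 0))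
      (γ (min t S) * η (max (t - S) 0)) ≤ t - s := by
    intro s t hst
    rcases le_total t S with ht | ht
    · have hs := hst.trans ht
      rw [min_eq_left ht, min_eq_left hs, max_eq_right (by linarith), max_eq_right (by linarith),
        g2, mul_one, mul_one]
      refine (h1 _ _).trans (le_of_eq ?_)
      rw [abs_sub_comm, abs_of_nonneg (by linarith)]
    rcases le_total s S with hs | hs
    · rw [min_eq_right ht, min_eq_left hs, max_eq_right (by linarith : s - S ≤ 0),
        max_eq_left (by linarith : 0 ≤ t - S), g2, mul_one, h3 S le_rfl]
      refine (dist_triangle _ z _).trans ?_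
      have e1 := h1 s S
      have e2 := g1 0 (t - S)
      rw [h3 S le_rfl, abs_sub_comm, abs_of_nonneg (by linarith)] at e1
      rw [g2, abs_sub_comm, abs_of_nonneg (by linarith), ← dist_mul_left' z, mul_one] at e2
      linarith
    · rw [min_eq_right ht, min_eq_right hs, max_eq_left (by linarith), max_eq_left (by linarith),
        dist_mul_left']
      refine (g1 _ _).trans (le_of_eq ?_)
      rw [abs_sub_comm, abs_of_nonneg (by linarith)]; ring
  refine ⟨fun t => γ (min t S) * η (max (t - S) 0), LipschitzWith.of_dist_le_mul fun s t => ?_, ?_,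
    fun t ht => ?_⟩
  · rw [NNReal.coe_one, one_mul, Real.dist_eq]
    rcases le_total s t with h | h
    · rw [abs_sub_comm]; exact (key s t h).trans (le_abs_self _)
    · rw [dist_comm]; exact (key t s h).trans (le_abs_self _)
  · simp [hS, h2, g2]
  · simp only
    rw [min_eq_right (by linarith), max_eq_left (by linarith), h3 S le_rfl, g3 _ (by linarith)]

lemma reach_of_kn_le (z : KH) {R : ℝ} (hR : kn z ≤ R) : Reach z (6 * R) := by
  have hk := kn_nonneg z
  set τ : ℝ := z.t + 2 * z.x * z.y with hτ
  have hτb : |τ| ≤ 2 * kn z ^ 2 := by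
    have h1 := abs_le.1 (abs_t_le_kn z)
    have h2 := sq_add_sq_le_kn z
    rw [abs_le]
    constructor <;> nlinarith [sq_nonneg (z.x + z.y), sq_nonneg (z.x - z.y)]
  set a : ℝ := √|τ| / 2 with ha
  have ha2 : a ^ 2 = |τ| / 4 := by rw [ha, div_pow, Real.sq_sqrt (abs_nonneg _)]; norm_num
  have ha0 : 0 ≤ a := by positivity
  have hak : a ≤ kn z := abs_le_of_sq_le_sq' (by nlinarith [sq_nonneg (kn z)]) hk |>.2
  obtain ⟨b, hb, hab⟩ : ∃ b, |b| = a ∧ -4 * a * b = τ := by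
    rcases le_total 0 τ with h | h
    · refine ⟨-a, by rw [abs_neg, abs_of_nonneg ha0], ?_⟩
      rw [abs_of_nonneg h] at ha2; linarith
    · refine ⟨a, abs_of_nonneg ha0, ?_⟩
      rw [abs_of_nonpos h] at ha2; linarith
  have h := ((((((Reach.xAxis z.x).mul (Reach.yAxis z.y) (by positivity) (by positivity)).mul
    (Reach.xAxis a) (by positivity) (by positivity)).mul
    (Reach.yAxis b) (by positivity) (by positivity)).mul
    (Reach.xAxis (-a)) (by positivity) (by positivity)).mul
    (Reach.yAxis (-b)) (by positivity) (by positivity)).mono (T := 6 * R) (by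
      rw [abs_neg, abs_neg, abs_of_nonneg ha0, hb]
      linarith [abs_x_le_kn z, abs_y_le_kn z])
  convert h using 1
  ext <;> simp
  linear_combination hτ - hab

/-- A segment covered by finitely many sets is no longer than the sum of their diameters. -/
lemma length_le_sum_of_cover {ι : Type*} (I : Finset ι) (S : ι → Set ℝ) (w : ι → ℝ) {a b : ℝ}
    (hcov : Icc a b ⊆ ⋃ i ∈ I, S i) (hw : ∀ i ∈ I, 0 ≤ w i)
    (hS : ∀ i ∈ I, ∀ s ∈ S i, ∀ t ∈ S i, |s - t| ≤ w i) : b - a ≤ ∑ i ∈ I, w i := by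
  rw [← ENNReal.ofReal_le_ofReal_iff (Finset.sum_nonneg hw), ← Real.volume_Icc,
    ENNReal.ofReal_sum_of_nonneg hw]
  refine (measure_mono hcov).trans ((measure_biUnion_finset_le _ _).trans
    (Finset.sum_le_sum fun i hi => (Real.volume_le_diam _).trans ?_))
  refine Metric.ediam_le fun s hs t ht => ?_
  rw [edist_dist]
  exact ENNReal.ofReal_le_ofReal (hS i hi s hs t ht)

/-- The balls `ball i (r i)`, `i ∈ I`, have radii in `(0, R]`, and `u` oscillates at most by `o i`
on them. -/
structure OscData (u : KH → ℝ) (I : Finset KH) (r o : KH → ℝ) (R : ℝ) : Prop where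
  pos : ∀ i ∈ I, 0 < r i
  le : ∀ i ∈ I, r i ≤ R
  nonneg : ∀ i ∈ I, 0 ≤ o i
  osc : ∀ i ∈ I, ∀ p ∈ Metric.ball i (r i), ∀ q ∈ Metric.ball i (r i), |u p - u q| ≤ o i

lemma abs_sub_le_sum_time {u : KH → ℝ} (hu : Continuous u) {I : Finset KH} {r o : KH → ℝ} {T : ℝ}
    (hI : OscData u I r o (T / 2)) (hT : 0 < T) {η : ℝ → KH} (hη : LipschitzWith 1 η)
    (hcov : ∀ t ∈ Icc 0 T, η t ∈ ⋃ i ∈ I, Metric.ball i (r i)) :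
    ENNReal.ofReal |u (η 0) - u (η T)| ≤ ∑ i ∈ I, ENNReal.ofReal (o i / r i) *
      volume (Icc 0 T ∩ {t | η t ∈ Metric.ball i (2 * r i)}) := by
  classical
  set J := I.filter fun i => ∃ t ∈ Icc 0 T, η t ∈ Metric.ball i (r i) with hJ
  have hlen : |u (η 0) - u (η T)| ≤ ∑ i ∈ J, o i := by
    have hsub : uIcc (u (η 0)) (u (η T)) ⊆
        ⋃ i ∈ J, u '' Metric.ball i (r i) := by
      have := intermediate_value_uIcc (a := 0) (b := T) (f := fun t => u (η t))
        ((hu.comp hη.continuous).continuousOn)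
      intro v hv
      obtain ⟨t, ht, rfl⟩ := this hv
      rw [uIcc_of_le hT.le] at ht
      obtain ⟨i, hi, hti⟩ := mem_iUnion₂.1 (hcov t ht)
      refine mem_iUnion₂.2 ⟨i, Finset.mem_filter.2 ⟨hi, t, ht, hti⟩, mem_image_of_mem _ hti⟩
    have := length_le_sum_of_cover J _ o hsub
      (fun i hi => hI.nonneg i (Finset.mem_filter.1 hi).1) (by
        rintro i hi _ ⟨p, hp, rfl⟩ _ ⟨q, hq, rfl⟩
        exact hI.osc i (Finset.mem_filter.1 hi).1 p hp q hq)
    rwa [max_sub_min_eq_abs, abs_sub_comm] at this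
  refine (ENNReal.ofReal_le_ofReal hlen).trans ?_
  rw [ENNReal.ofReal_sum_of_nonneg fun i hi => hI.nonneg i (Finset.mem_filter.1 hi).1]
  refine le_trans (Finset.sum_le_sum fun i hi => ?_)
    (Finset.sum_le_sum_of_subset (Finset.filter_subset _ I))
  obtain ⟨hiI, t, ht, hti⟩ := Finset.mem_filter.1 hi
  have hr := hI.pos i hiI
  have hle := hI.le i hiI
  have hclose : ∀ s, |s - t| < r i → η s ∈ Metric.ball i (2 * r i) := by
    intro s hs
    have h1 := hη.dist_le_mul s t
    rw [NNReal.coe_one, one_mul, Real.dist_eq] at h1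
    have h2 := dist_triangle (η s) (η t) i
    rw [Metric.mem_ball] at hti ⊢
    linarith
  have hvol : ENNReal.ofReal (r i) ≤
      volume (Icc 0 T ∩ {t | η t ∈ Metric.ball i (2 * r i)}) := by
    rcases le_total t (T / 2) with h | h
    · have : Ico t (t + r i) ⊆ Icc 0 T ∩ {t | η t ∈ Metric.ball i (2 * r i)} := fun s hs =>
        ⟨⟨ht.1.trans hs.1, by linarith [hs.2]⟩, hclose s (by
          rw [abs_lt]; constructor <;> linarith [hs.1, hs.2])⟩
      simpa using measure_mono (μ := volume) this
    · have : Ioc (t - r i) t ⊆ Icc 0 T ∩ {t | η t ∈ Metric.ball i (2 * r i)} := fun s hs =>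
        ⟨⟨by linarith [hs.1], hs.2.trans ht.2⟩, hclose s (by
          rw [abs_lt]; constructor <;> linarith [hs.1, hs.2])⟩
      simpa using measure_mono (μ := volume) this
  calc ENNReal.ofReal (o i) = ENNReal.ofReal (o i / r i) * ENNReal.ofReal (r i) := by
        rw [← ENNReal.ofReal_mul (div_nonneg (hI.nonneg i hiI) hr.le), div_mul_cancel₀ _ hr.ne']
    _ ≤ _ := by gcongr

lemma lintegral_sub_translate_le {u : KH → ℝ} (hu : Continuous u) {I : Finset KH} {r o : KH → ℝ}
    {R : ℝ} (hR : 0 < R) (hI : OscData u I r o R) (x₀ : KH)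
    (hcov : Metric.closedBall x₀ (13 * R) ⊆ ⋃ i ∈ I, Metric.ball i (r i)) {z : KH}
    (hz : kn z ≤ 2 * R) :
    ∫⁻ p in Metric.ball x₀ R, ENNReal.ofReal |u p - u (p * z)| ≤
      ENNReal.ofReal (192 * R * ∑ i ∈ I, o i * r i ^ 3) * c0 := by
  obtain ⟨γ, hγ, hγ0, hγT⟩ := reach_of_kn_le z hz
  set T := 6 * (2 * R) with hTdef
  have hT : 0 < T := by positivity
  have hcont : Continuous fun pt : KH × ℝ => pt.1 * γ pt.2 :=
    continuous_fst.mul (hγ.continuous.comp continuous_snd)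
  have hI' : OscData u I r o (T / 2) :=
    ⟨hI.pos, fun i hi => (hI.le i hi).trans (by rw [hTdef]; linarith), hI.nonneg, hI.osc⟩
  have hpt : ∀ p ∈ Metric.ball x₀ R, ENNReal.ofReal |u p - u (p * z)| ≤
      ∑ i ∈ I, ENNReal.ofReal (o i / r i) * ∫⁻ t in Icc 0 T,
        (Metric.ball i (2 * r i)).indicator 1 (p * γ t) := by
    intro p hp
    have hη : LipschitzWith 1 fun t => p * γ t := by
      refine LipschitzWith.of_dist_le_mul fun s t => ?_
      rw [dist_mul_left']; exact hγ.dist_le_mul s t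
    have := abs_sub_le_sum_time hu hI' hT hη (fun t ht => hcov (by
      have h1 := hγ.dist_le_mul t 0
      rw [NNReal.coe_one, one_mul, Real.dist_eq, sub_zero, abs_of_nonneg ht.1, hγ0,
        dist_comm, dist_one] at h1
      have h2 := dist_triangle (p * γ t) p x₀
      rw [dist_comm (p * γ t) p, dist_mul_self] at h2
      rw [Metric.mem_ball] at hp
      rw [Metric.mem_closedBall]
      linarith [ht.2]))
    simp only [hγ0, mul_one, hγT T le_rfl] at this
    refine this.trans (Finset.sum_le_sum fun i _ => ?_)
    gcongr
    have hm : MeasurableSet ((fun t => p * γ t) ⁻¹' Metric.ball i (2 * r i)) :=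
      hη.continuous.measurable measurableSet_ball
    refine le_of_eq ?_
    calc volume (Icc 0 T ∩ (fun t => p * γ t) ⁻¹' Metric.ball i (2 * r i))
        = ∫⁻ t in Icc 0 T, ((fun t => p * γ t) ⁻¹' Metric.ball i (2 * r i)).indicator 1 t := by
          rw [lintegral_indicator_one hm, Measure.restrict_apply hm, inter_comm]
      _ = _ := rfl
  refine (setLIntegral_mono_ae' measurableSet_ball (ae_of_all _ hpt)).trans ?_
  refine (setLIntegral_le_lintegral _ _).trans ?_
  have hmI : ∀ i, Measurable fun pt : KH × ℝ =>
      (Metric.ball i (2 * r i)).indicator (1 : KH → ℝ≥0∞) (pt.1 * γ pt.2) := fun i =>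
    (measurable_one.indicator measurableSet_ball).comp hcont.measurable
  rw [lintegral_finsetSum' _ fun i _ => ((hmI i).lintegral_prod_right'.const_mul _).aemeasurable]
  rw [Finset.mul_sum, ENNReal.ofReal_sum_of_nonneg, Finset.sum_mul]
  swap
  · intro i hi
    have := hI.pos i hi
    have := hI.nonneg i hi
    positivity
  refine Finset.sum_le_sum fun i hi => ?_
  have hr := hI.pos i hi
  have ho := hI.nonneg i hi
  rw [lintegral_const_mul _ (hmI i).lintegral_prod_right',
    lintegral_lintegral_swap (hmI i).aemeasurable]
  have hin : ∀ t : ℝ, ∫⁻ p : KH, (Metric.ball i (2 * r i)).indicator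
      (1 : KH → ℝ≥0∞) (p * γ t) = ENNReal.ofReal ((2 * r i) ^ 4) * c0 := by
    intro t
    rw [← volume_ball i (by positivity), ← measure_preimage_mul_right volume (γ t),
      ← lintegral_indicator_one (measurableSet_ball.preimage (measurable_mul_const _))]
    rfl
  simp only [hin, lintegral_const, Measure.restrict_apply_univ, Real.volume_Icc, sub_zero]
  rw [mul_right_comm, ← mul_assoc, ← mul_assoc, ← ENNReal.ofReal_mul (by positivity),
    ← ENNReal.ofReal_mul (by positivity)]
  refine le_of_eq ?_
  congr 2
  rw [hTdef]
  field_simp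
  ring

/-- A Poincaré inequality with the gradient read off from a finite cover by balls. -/
lemma lintegral_lintegral_sub_le {u : KH → ℝ} (hu : Continuous u) {I : Finset KH} {r o : KH → ℝ}
    {R : ℝ} (hR : 0 < R) (hI : OscData u I r o R) (x₀ : KH)
    (hcov : Metric.closedBall x₀ (13 * R) ⊆ ⋃ i ∈ I, Metric.ball i (r i)) :
    ∫⁻ p in Metric.ball x₀ R, ∫⁻ q in Metric.ball x₀ R, ENNReal.ofReal |u p - u q| ≤
      ENNReal.ofReal (3072 * R ^ 5 * ∑ i ∈ I, o i * r i ^ 3) * c0 ^ 2 := by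
  have hc : Continuous fun pz : KH × KH => ENNReal.ofReal |u pz.1 - u (pz.1 * pz.2)| :=
    ENNReal.continuous_ofReal.comp
      (((hu.comp continuous_fst).sub (hu.comp (continuous_fst.mul continuous_snd))).abs)
  calc ∫⁻ p in Metric.ball x₀ R, ∫⁻ q in Metric.ball x₀ R, ENNReal.ofReal |u p - u q|
      ≤ ∫⁻ p in Metric.ball x₀ R, ∫⁻ z in Metric.ball 1 (2 * R),
          ENNReal.ofReal |u p - u (p * z)| := by
        refine setLIntegral_mono_ae' measurableSet_ball (ae_of_all _ fun p hp => ?_)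
        rw [← lintegral_indicator measurableSet_ball, ← lintegral_indicator measurableSet_ball,
          ← lintegral_mul_left_eq_self _ p]
        refine lintegral_mono fun z => ?_
        by_cases hz : p * z ∈ Metric.ball x₀ R
        · have : z ∈ Metric.ball 1 (2 * R) := by
            rw [Metric.mem_ball'] at *
            rw [dist_one, ← dist_mul_self p]
            rw [dist_comm] at hp
            linarith [dist_triangle p x₀ (p * z)]
          simp [hz, this]
        · simp [hz]
    _ = ∫⁻ z in Metric.ball 1 (2 * R), ∫⁻ p in Metric.ball x₀ R,
          ENNReal.ofReal |u p - u (p * z)| :=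
        lintegral_lintegral_swap hc.measurable.aemeasurable
    _ ≤ ∫⁻ z in Metric.ball (1 : KH) (2 * R),
          ENNReal.ofReal (192 * R * ∑ i ∈ I, o i * r i ^ 3) * c0 := by
        refine setLIntegral_mono_ae' measurableSet_ball (ae_of_all _ fun z hz => ?_)
        rw [Metric.mem_ball', dist_one] at hz
        exact lintegral_sub_translate_le hu hR hI x₀ hcov hz.le
    _ = _ := by
        have hs : 0 ≤ ∑ i ∈ I, o i * r i ^ 3 := Finset.sum_nonneg fun i hi =>
          mul_nonneg (hI.nonneg i hi) (pow_nonneg (hI.pos i hi).le 3)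
        rw [lintegral_const, Measure.restrict_apply_univ, volume_ball _ (by positivity),
          mul_mul_mul_comm, ← ENNReal.ofReal_mul (by positivity), ← sq]
        congr 2
        ring

/-- The mean value of `u` over a ball. -/
def mean (u : KH → ℝ) (x : KH) (R : ℝ) : ℝ := ⨍ p in Metric.ball x R, u p

lemma volume_real_ball (p : KH) {r : ℝ} (hr : 0 ≤ r) :
    volume.real (Metric.ball p r) = r ^ 4 * c0.toReal := by
  rw [Measure.real, volume_ball p hr, ENNReal.toReal_mul, ENNReal.toReal_ofReal (by positivity)]

lemma integrableOn_ball {u : KH → ℝ} (hu : Continuous u) (x : KH) (R : ℝ) :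
    IntegrableOn u (Metric.ball x R) :=
  (hu.continuousOn.integrableOn_compact (isCompact_closedBall x R)).mono_set
    Metric.ball_subset_closedBall

lemma abs_mean_sub_mean_le {u : KH → ℝ} (hu : Continuous u) {I : Finset KH} {r o : KH → ℝ}
    {R R' : ℝ} (hR : 0 < R) (hR' : 0 < R') (hRR' : R ≤ 2 * R') (hI : OscData u I r o R)
    {x x' : KH} (hsub : Metric.ball x' R' ⊆ Metric.ball x R)
    (hcov : Metric.closedBall x (13 * R) ⊆ ⋃ i ∈ I, Metric.ball i (r i)) :
    |mean u x R - mean u x' R'| * R ^ 3 ≤ 49152 * ∑ i ∈ I, o i * r i ^ 3 := by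
  have hc : 0 < c0.toReal := ENNReal.toReal_pos c0_pos.ne' c0_lt_top.ne
  have hs : 0 ≤ ∑ i ∈ I, o i * r i ^ 3 := Finset.sum_nonneg fun i hi =>
    mul_nonneg (hI.nonneg i hi) (pow_nonneg (hI.pos i hi).le 3)
  have h1 := integrableOn_ball hu x R
  have h2 := integrableOn_ball hu x' R'
  have hfin : ∀ (a : KH) (s : ℝ), IsFiniteMeasure (volume.restrict (Metric.ball a s)) := fun a s =>
    ⟨by rw [Measure.restrict_apply_univ]; exact measure_ball_lt_top⟩
  have := hfin x R
  have := hfin x' R'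
  have hid : ∫ p in Metric.ball x R, ∫ q in Metric.ball x' R', (u p - u q) =
      (R ^ 4 * c0.toReal) * (R' ^ 4 * c0.toReal) * (mean u x R - mean u x' R') := by
    have hin : ∀ p, ∫ q in Metric.ball x' R', (u p - u q) =
        (R' ^ 4 * c0.toReal) * u p - ∫ q in Metric.ball x' R', u q := by
      intro p
      rw [integral_sub (integrable_const _) h2, integral_const, smul_eq_mul, Measure.real,
        Measure.restrict_apply_univ, ← Measure.real, volume_real_ball _ hR'.le]
    simp only [hin]
    rw [integral_sub (h1.const_mul _) (integrable_const _), integral_const_mul, integral_const,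
      smul_eq_mul, Measure.real, Measure.restrict_apply_univ, ← Measure.real,
      volume_real_ball _ hR.le]
    unfold mean
    rw [setAverage_eq, setAverage_eq, volume_real_ball _ hR.le, volume_real_ball _ hR'.le]
    simp only [smul_eq_mul]
    field_simp
  have hle : ENNReal.ofReal |∫ p in Metric.ball x R, ∫ q in Metric.ball x' R', (u p - u q)| ≤
      ENNReal.ofReal (3072 * R ^ 5 * (∑ i ∈ I, o i * r i ^ 3) * c0.toReal ^ 2) := by
    rw [ENNReal.ofReal_mul (by positivity), ENNReal.ofReal_pow hc.le,
      ENNReal.ofReal_toReal c0_lt_top.ne]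
    refine le_trans ?_ (lintegral_lintegral_sub_le hu hR hI x hcov)
    rw [← Real.norm_eq_abs, ofReal_norm]
    refine (enorm_integral_le_lintegral_enorm _).trans (lintegral_mono fun p => ?_)
    refine (enorm_integral_le_lintegral_enorm _).trans ?_
    refine (lintegral_mono_set hsub).trans (lintegral_mono fun q => ?_)
    rw [← ofReal_norm, Real.norm_eq_abs]
  rw [ENNReal.ofReal_le_ofReal_iff (by positivity), hid, abs_mul, abs_of_pos (by positivity)] at hle
  have hR4 : R ^ 4 ≤ 16 * R' ^ 4 := by
    calc R ^ 4 ≤ (2 * R') ^ 4 := by gcongr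
      _ = _ := by ring
  have e1 : R ^ 4 * |mean u x R - mean u x' R'| ≤
      16 * R' ^ 4 * |mean u x R - mean u x' R'| := by gcongr
  have e2 : R' ^ 4 * |mean u x R - mean u x' R'| ≤ 3072 * R * ∑ i ∈ I, o i * r i ^ 3 := by
    have hpos : 0 < R ^ 4 * c0.toReal ^ 2 := by positivity
    refine le_of_mul_le_mul_left ?_ hpos
    linarith
  refine le_of_mul_le_mul_left ?_ hR
  nlinarith

/-- Hölder's inequality with exponents `4` and `4/3`. -/
lemma sum_mul_cube_le {ι : Type*} (I : Finset ι) (o r : ι → ℝ) (ho : ∀ i ∈ I, 0 ≤ o i)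
    (hr : ∀ i ∈ I, 0 ≤ r i) {τ S : ℝ} (hτ : 0 < τ) (hS : 0 < S) (h1 : ∑ i ∈ I, o i ^ 4 ≤ τ ^ 4)
    (h2 : ∑ i ∈ I, r i ^ 4 ≤ S ^ 4) : ∑ i ∈ I, o i * r i ^ 3 ≤ τ * S ^ 3 := by
  have young : ∀ a b : ℝ, 0 ≤ a → 0 ≤ b → a * b ^ 3 ≤ a ^ 4 / 4 + 3 * b ^ 4 / 4 := by
    intro a b ha hb
    nlinarith [sq_nonneg (a ^ 2 - b ^ 2), sq_nonneg (a - b), mul_nonneg ha hb,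
      mul_nonneg (sq_nonneg (a - b)) (sq_nonneg (a + b)), mul_nonneg (sq_nonneg (a - b))
        (mul_nonneg ha hb), mul_nonneg (sq_nonneg (a - b)) (sq_nonneg b),
      mul_nonneg (sq_nonneg (a - b)) (sq_nonneg a)]
  have h3 : ∑ i ∈ I, (o i / τ) * (r i / S) ^ 3 ≤ 1 := by
    calc ∑ i ∈ I, (o i / τ) * (r i / S) ^ 3
        ≤ ∑ i ∈ I, ((o i / τ) ^ 4 / 4 + 3 * (r i / S) ^ 4 / 4) :=
          Finset.sum_le_sum fun i hi => young _ _ (div_nonneg (ho i hi) hτ.le)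
            (div_nonneg (hr i hi) hS.le)
      _ = (∑ i ∈ I, o i ^ 4) / τ ^ 4 / 4 + 3 * ((∑ i ∈ I, r i ^ 4) / S ^ 4) / 4 := by
          rw [Finset.sum_add_distrib, Finset.sum_div, Finset.sum_div, Finset.sum_div,
            Finset.mul_sum, Finset.sum_div]
          simp only [div_pow]
      _ ≤ 1 / 4 + 3 * 1 / 4 := by
          gcongr
          · exact div_le_one_of_le₀ h1 (by positivity)
          · exact div_le_one_of_le₀ h2 (by positivity)
      _ = 1 := by norm_num
  have h4 : ∑ i ∈ I, o i * r i ^ 3 = τ * S ^ 3 * ∑ i ∈ I, (o i / τ) * (r i / S) ^ 3 := by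
    rw [Finset.mul_sum]
    refine Finset.sum_congr rfl fun i _ => ?_
    field_simp
  rw [h4]
  exact mul_le_of_le_one_right (by positivity) h3

/-- Disjoint balls inside a ball. -/
lemma sum_pow_four_le {I : Finset KH} {ρ : KH → ℝ} (hρ : ∀ i ∈ I, 0 ≤ ρ i)
    (hd : (I : Set KH).PairwiseDisjoint fun i => Metric.closedBall i (ρ i)) {A : Set KH} {V : ℝ}
    (hV : 0 ≤ V) (hA : volume A ≤ ENNReal.ofReal V * c0)
    (hsub : ∀ i ∈ I, Metric.closedBall i (ρ i) ⊆ A) : ∑ i ∈ I, ρ i ^ 4 ≤ V := by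
  rw [← ENNReal.ofReal_le_ofReal_iff hV,
    ← ENNReal.mul_le_mul_iff_left c0_pos.ne' c0_lt_top.ne]
  refine le_trans ?_ hA
  rw [ENNReal.ofReal_sum_of_nonneg fun i hi => pow_nonneg (hρ i hi) 4, Finset.sum_mul]
  calc ∑ i ∈ I, ENNReal.ofReal (ρ i ^ 4) * c0 = ∑ i ∈ I, volume (Metric.closedBall i (ρ i)) :=
        Finset.sum_congr rfl fun i hi => (volume_closedBall i (hρ i hi)).symm
    _ = volume (⋃ i ∈ I, Metric.closedBall i (ρ i)) :=
        (measure_biUnion_finset hd fun i _ => measurableSet_closedBall).symm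
    _ ≤ volume A := measure_mono (iUnion₂_subset hsub)

/-- Covering of a compact set by balls whose concentric fifths are disjoint. -/
lemma exists_finset_cover {K : Set KH} (hK : IsCompact K) (r : KH → ℝ) (hr : ∀ x, 0 < r x) :
    ∃ I : Finset KH, (I : Set KH) ⊆ K ∧
      ((I : Set KH).PairwiseDisjoint fun i => Metric.closedBall i (r i / 5)) ∧
      K ⊆ ⋃ i ∈ I, Metric.ball i (r i) := by
  obtain ⟨J, hJK, hJ⟩ := hK.elim_nhds_subcover (fun x => Metric.ball x (r x / 5))
    fun x _ => Metric.ball_mem_nhds x (by have := hr x; positivity)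
  obtain ⟨B, hB⟩ : ∃ B, ∀ a ∈ J, r a / 5 ≤ B := by
    obtain ⟨B, hB⟩ := (J.image fun a => r a / 5).bddAbove
    exact ⟨B, fun a ha => hB (Finset.mem_coe.2 (Finset.mem_image_of_mem _ ha))⟩
  obtain ⟨U, hUJ, hUd, hUc⟩ := Vitali.exists_disjoint_subfamily_covering_enlargement_closedBall
    (J : Set KH) id (fun a => r a / 5) B hB 4 (by norm_num)
  have hfin : U.Finite := J.finite_toSet.subset hUJ
  refine ⟨hfin.toFinset, ?_, ?_, ?_⟩
  · rw [hfin.coe_toFinset]; exact fun i hi => hJK i (hUJ hi)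
  · rw [hfin.coe_toFinset]; exact hUd
  · intro x hx
    obtain ⟨a, ha, hxa⟩ := mem_iUnion₂.1 (hJ hx)
    obtain ⟨b, hb, hab⟩ := hUc a ha
    refine mem_iUnion₂.2 ⟨b, hfin.mem_toFinset.2 hb, ?_⟩
    have h1 := hab (Metric.ball_subset_closedBall hxa)
    simp only [id, Metric.mem_closedBall] at h1
    rw [Metric.mem_ball]
    linarith [hr b]

lemma OscData.mono {u : KH → ℝ} {I J : Finset KH} {r o : KH → ℝ} {R S : ℝ}
    (h : OscData u I r o R) (hJ : J ⊆ I) (hRS : R ≤ S) : OscData u J r o S :=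
  ⟨fun i hi => h.pos i (hJ hi), fun i hi => (h.le i (hJ hi)).trans hRS,
    fun i hi => h.nonneg i (hJ hi), fun i hi => h.osc i (hJ hi)⟩

/-- The constant of the Poincaré inequality in Hölder form. -/
def poincareConst : ℝ := 49152 * 75 ^ 3

lemma sum_radii_le {I : Finset KH} {r : KH → ℝ} (hr : ∀ i ∈ I, 0 ≤ r i)
    (hd : (I : Set KH).PairwiseDisjoint fun i => Metric.closedBall i (r i / 5)) {A : Set KH} {S : ℝ}
    (hA : volume A ≤ ENNReal.ofReal (S ^ 4) * c0)
    (hsub : ∀ i ∈ I, Metric.closedBall i (r i / 5) ⊆ A) : ∑ i ∈ I, r i ^ 4 ≤ (5 * S) ^ 4 := by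
  have := sum_pow_four_le (I := I) (ρ := fun i => r i / 5)
    (fun i hi => by have := hr i hi; positivity) hd (V := S ^ 4) (by positivity) hA hsub
  simp only [div_pow] at this
  rw [← Finset.sum_div, div_le_iff₀ (by positivity)] at this
  linarith

open Classical in
lemma abs_mean_sub_mean_le_of_sum {u : KH → ℝ} (hu : Continuous u) {I : Finset KH} {r o : KH → ℝ}
    {R R' : ℝ} (hR : 0 < R) (hR' : 0 < R') (hRR' : R ≤ 2 * R') (hI : OscData u I r o R)
    (hd : (I : Set KH).PairwiseDisjoint fun i => Metric.closedBall i (r i / 5))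
    {x x' : KH} (hsub : Metric.ball x' R' ⊆ Metric.ball x R)
    (hcov : Metric.closedBall x (13 * R) ⊆ ⋃ i ∈ I, Metric.ball i (r i)) {τ : ℝ} (hτ : 0 < τ)
    (hsum : ∑ i ∈ I with dist i x < 14 * R, o i ^ 4 ≤ τ ^ 4) :
    |mean u x R - mean u x' R'| ≤ poincareConst * τ := by
  set J := I.filter fun i => dist i x < 14 * R with hJ
  have hJI : J ⊆ I := Finset.filter_subset _ _
  have hIJ := hI.mono hJI le_rfl
  have h1 := abs_mean_sub_mean_le hu hR hR' hRR' hIJ hsub (fun p hp => by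
    obtain ⟨i, hi, hpi⟩ := mem_iUnion₂.1 (hcov hp)
    refine mem_iUnion₂.2 ⟨i, Finset.mem_filter.2 ⟨hi, ?_⟩, hpi⟩
    rw [Metric.mem_closedBall] at hp
    rw [Metric.mem_ball, dist_comm] at hpi
    linarith [hI.le i hi, dist_triangle i p x])
  have h2 : ∑ i ∈ J, r i ^ 4 ≤ (5 * (15 * R)) ^ 4 := by
    refine sum_radii_le (fun i hi => (hIJ.pos i hi).le) (hd.subset (by simpa using hJI))
      (A := Metric.ball x (15 * R)) (volume_ball _ (by positivity)).le
      fun i hi p hp => ?_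
    rw [Metric.mem_closedBall] at hp
    rw [Metric.mem_ball]
    linarith [hIJ.le i hi, dist_triangle p i x, (Finset.mem_filter.1 hi).2, hIJ.pos i hi]
  have h3 := sum_mul_cube_le J o r hIJ.nonneg (fun i hi => (hIJ.pos i hi).le) hτ
    (by positivity) hsum h2
  refine le_of_mul_le_mul_right (h1.trans (?_ : _ ≤ _)) (pow_pos hR 3)
  unfold poincareConst
  calc _ ≤ 49152 * (τ * (5 * (15 * R)) ^ 3) := by gcongr
    _ = _ := by ring

lemma abs_mean_le {u : KH → ℝ} {x : KH} {s c : ℝ} (hs : 0 < s)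
    (h : ∀ p ∈ Metric.ball x s, |u p| ≤ c) : |mean u x s| ≤ c := by
  have hc : 0 < c0.toReal := ENNReal.toReal_pos c0_pos.ne' c0_lt_top.ne
  unfold mean
  rw [setAverage_eq, smul_eq_mul, abs_mul, abs_inv, abs_of_nonneg measureReal_nonneg,
    inv_mul_le_iff₀ (by rw [volume_real_ball _ hs.le]; positivity), mul_comm]
  exact norm_setIntegral_le_of_norm_le_const (f := u) measure_ball_lt_top fun p hp => h p hp

lemma sum_geom_le (n : ℕ) : ∑ j ∈ Finset.range n, (9 / 10 : ℝ) ^ j ≤ 10 := by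
  rw [geom_sum_eq (by norm_num)]
  have : (0 : ℝ) ≤ (9 / 10) ^ n := by positivity
  rw [div_le_iff_of_neg (by norm_num)]
  linarith

/-- The threshold in the density lower bound at the points of a continuum. -/
def loewnerConst : ℝ := 1 / (80 * poincareConst)

lemma loewnerConst_pos : 0 < loewnerConst := by unfold loewnerConst poincareConst; positivity

open Classical in
lemma exists_scale {u : KH → ℝ} (hu : Continuous u) {I : Finset KH} {r o : KH → ℝ} {x₀ : KH}
    {R : ℝ} (hR : 0 < R) {N : ℕ} (hI : OscData u I r o (4 * R / 2 ^ N))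
    (hd : (I : Set KH).PairwiseDisjoint fun i => Metric.closedBall i (r i / 5))
    (hcov : Metric.closedBall x₀ (54 * R) ⊆ ⋃ i ∈ I, Metric.ball i (r i))
    (hm : 1 / 2 ≤ mean u x₀ (2 * R)) {x : KH} (hx : dist x x₀ ≤ 2 * R)
    (hosc : ∀ p ∈ Metric.ball x (4 * R / 2 ^ N), |u p| ≤ 1 / 8) :
    ∃ j ≤ N, loewnerConst ^ 4 * (1 / 2) ^ j ≤
      ∑ i ∈ I with dist i x < 14 * (4 * R / 2 ^ j), o i ^ 4 := by
  by_contra! hcon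
  have hα := loewnerConst_pos
  have hC : 0 < poincareConst := by unfold poincareConst; positivity
  have hpos : ∀ j : ℕ, 0 < 4 * R / 2 ^ j := fun j => by positivity
  have hle4 : ∀ j : ℕ, 4 * R / 2 ^ j ≤ 4 * R := fun j =>
    div_le_self (by positivity) (one_le_pow₀ (by norm_num))
  have hsum : ∀ j ≤ N, ∑ i ∈ I with dist i x < 14 * (4 * R / 2 ^ j), o i ^ 4 ≤
      (loewnerConst * (9 / 10) ^ j) ^ 4 := by
    intro j hj
    refine (hcon j hj).le.trans ?_
    rw [mul_pow, ← pow_mul, mul_comm j 4, pow_mul]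
    gcongr
    norm_num
  have hIj : ∀ j ≤ N, OscData u I r o (4 * R / 2 ^ j) := fun j hj =>
    hI.mono subset_rfl (by gcongr; norm_num)
  have hcovj : ∀ j : ℕ, Metric.closedBall x (13 * (4 * R / 2 ^ j)) ⊆
      ⋃ i ∈ I, Metric.ball i (r i) := fun j => subset_trans (fun p hp => by
    rw [Metric.mem_closedBall] at *
    linarith [dist_triangle p x x₀, hle4 j]) hcov
  have hstep : ∀ j, j ≤ N → ∀ x' R', 0 < R' → 4 * R / 2 ^ j ≤ 2 * R' →
      Metric.ball x' R' ⊆ Metric.ball x (4 * R / 2 ^ j) →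
      |mean u x (4 * R / 2 ^ j) - mean u x' R'| ≤
        poincareConst * (loewnerConst * (9 / 10) ^ j) := fun j hj x' R' h1 h2 h3 =>
    abs_mean_sub_mean_le_of_sum hu (hpos j) h1 h2 (hIj j hj) hd h3 (hcovj j) (by positivity)
      (hsum j hj)
  have h0 := hstep 0 (Nat.zero_le _) x₀ (2 * R) (by positivity) (by simp; linarith) (fun p hp => by
    rw [Metric.mem_ball] at *
    simp only [pow_zero, div_one]
    linarith [dist_triangle p x₀ x, dist_comm x x₀])
  have htel := dist_le_range_sum_dist (fun j => mean u x (4 * R / 2 ^ j)) N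
  have hstep' : ∀ j ∈ Finset.range N, dist (mean u x (4 * R / 2 ^ j))
      (mean u x (4 * R / 2 ^ (j + 1))) ≤ poincareConst * loewnerConst * (9 / 10) ^ j := by
    intro j hj
    rw [Real.dist_eq, mul_assoc]
    have e : 4 * R / 2 ^ (j + 1) = 4 * R / 2 ^ j / 2 := by rw [pow_succ]; field_simp
    exact hstep j (Finset.mem_range.1 hj).le x _ (hpos _) (by rw [e]; linarith)
      (Metric.ball_subset_ball (by rw [e]; linarith [hpos j]))
  have hS := (Finset.sum_le_sum hstep').trans_eq (Finset.mul_sum _ _ _).symm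
  have hg := mul_le_mul_of_nonneg_left (sum_geom_le N)
    (by positivity : 0 ≤ poincareConst * loewnerConst)
  have hlast := abs_mean_le (hpos N) hosc
  have hα' : poincareConst * loewnerConst = 1 / 80 := by
    unfold loewnerConst; field_simp
  simp only [pow_zero, mul_one, hα'] at h0 hS hg
  rw [Real.dist_eq] at htel
  simp only [pow_zero] at htel
  have t1 := abs_le.1 (htel.trans (hS.trans hg))
  have t2 := abs_le.1 hlast
  have t3 := abs_le.1 h0
  linarith [t1.1, t1.2, t2.1, t2.2, t3.1, t3.2]

/-- A discrete Loewner estimate: a continuous function which vanishes on a set of large extent and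
is large on average has a definite amount of conformal energy. -/
lemma loewner {u : KH → ℝ} (hu : Continuous u) {I : Finset KH} {r o : KH → ℝ} {x₀ : KH}
    {R : ℝ} (hR : 0 < R) {N : ℕ} (hI : OscData u I r o (4 * R / 2 ^ N))
    (hd : (I : Set KH).PairwiseDisjoint fun i => Metric.closedBall i (r i / 5))
    (hcov : Metric.closedBall x₀ (54 * R) ⊆ ⋃ i ∈ I, Metric.ball i (r i))
    (hm : 1 / 2 ≤ mean u x₀ (2 * R)) {K : Set KH} (hK : K ⊆ Metric.closedBall x₀ (2 * R))
    (hosc : ∀ x ∈ K, ∀ p ∈ Metric.ball x (4 * R / 2 ^ N), |u p| ≤ 1 / 8)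
    {h : KH → ℝ} (hh : LipschitzWith 1 h) (hKh : Icc 0 R ⊆ h '' K) :
    loewnerConst ^ 4 / 448 ≤ ∑ i ∈ I, o i ^ 4 := by
  classical
  have hα := loewnerConst_pos
  have hex : ∀ x, ∃ j : ℕ, x ∈ K → loewnerConst ^ 4 * (1 / 2) ^ j ≤
      ∑ i ∈ I with dist i x < 14 * (4 * R / 2 ^ j), o i ^ 4 := by
    intro x
    by_cases hx : x ∈ K
    · obtain ⟨j, -, hj⟩ := exists_scale hu hR hI hd hcov hm (Metric.mem_closedBall.1 (hK hx))
        (hosc x hx)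
      exact ⟨j, fun _ => hj⟩
    · exact ⟨0, fun h => absurd h hx⟩
  choose j hj using hex
  set s : KH → ℝ := fun x => 4 * R / 2 ^ j x with hs
  have hspos : ∀ x, 0 < s x := fun x => by simp only [hs]; positivity
  obtain ⟨U, hUK, hUd, hUc⟩ := Vitali.exists_disjoint_subfamily_covering_enlargement_closedBall
    K id (fun x => 14 * s x) (14 * (4 * R)) (fun x _ => by
      have : s x ≤ 4 * R := div_le_self (by positivity) (one_le_pow₀ (by norm_num))
      linarith) 4 (by norm_num)
  have hω : ∀ x ∈ U, loewnerConst ^ 4 * s x / (4 * R) ≤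
      ∑ i ∈ I with dist i x < 14 * s x, o i ^ 4 := by
    intro x hx
    refine le_trans (le_of_eq ?_) (hj x (hUK hx))
    simp only [hs]
    rw [one_div, inv_pow]
    field_simp
  have hne : ∀ x, ∃ i, x ∈ U → i ∈ I ∧ dist i x < 14 * s x := by
    intro x
    by_cases hx : x ∈ U
    · have hpos : 0 < ∑ i ∈ I with dist i x < 14 * s x, o i ^ 4 :=
        lt_of_lt_of_le (by have := hspos x; positivity) (hω x hx)
      obtain ⟨i, hi, -⟩ := Finset.exists_ne_zero_of_sum_ne_zero hpos.ne'
      exact ⟨i, fun _ => Finset.mem_filter.1 hi⟩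
    · exact ⟨x, fun h => absurd h hx⟩
  choose g hg using hne
  have hfin : U.Finite := by
    refine Set.Finite.of_injOn (f := g) (t := (I : Set KH)) (fun x hx => (hg x hx).1) ?_
      I.finite_toSet
    intro x hx y hy hxy
    by_contra hne
    refine Set.disjoint_left.1 (hUd hx hy hne) (?_ : g x ∈ _) ?_
    · exact Metric.mem_closedBall.2 (hg x hx).2.le
    · rw [hxy]; exact Metric.mem_closedBall.2 (hg y hy).2.le
  set W := hfin.toFinset with hW
  have hlen := length_le_sum_of_cover W (fun b => h '' Metric.closedBall b (56 * s b))
    (fun b => 112 * s b) (a := 0) (b := R) (fun v hv => by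
      obtain ⟨x, hx, rfl⟩ := hKh hv
      obtain ⟨b, hb, hxb⟩ := hUc x hx
      refine mem_iUnion₂.2 ⟨b, hfin.mem_toFinset.2 hb, mem_image_of_mem _ ?_⟩
      have := hxb (Metric.mem_closedBall_self (by have := hspos x; positivity))
      simp only [id, Metric.mem_closedBall] at this ⊢
      linarith)
    (fun b _ => by have := hspos b; positivity) (by
      rintro b _ _ ⟨p, hp, rfl⟩ _ ⟨q, hq, rfl⟩
      have := hh.dist_le_mul p q
      rw [Real.dist_eq, NNReal.coe_one, one_mul] at this
      rw [Metric.mem_closedBall] at hp hq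
      linarith [dist_triangle_right p q b])
  have hdisj : ∑ b ∈ W, ∑ i ∈ I with dist i b < 14 * s b, o i ^ 4 ≤ ∑ i ∈ I, o i ^ 4 := by
    rw [← Finset.sum_biUnion]
    · exact Finset.sum_le_sum_of_subset_of_nonneg
        (Finset.biUnion_subset.2 fun b _ => Finset.filter_subset _ _)
        fun i hi _ => pow_nonneg (hI.nonneg i hi) 4
    · intro b hb c hc hbc
      refine Finset.disjoint_left.2 fun i hib hic => ?_
      refine Set.disjoint_left.1 (hUd (hfin.mem_toFinset.1 hb) (hfin.mem_toFinset.1 hc) hbc)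
        (?_ : i ∈ _) ?_
      · exact Metric.mem_closedBall.2 (Finset.mem_filter.1 hib).2.le
      · exact Metric.mem_closedBall.2 (Finset.mem_filter.1 hic).2.le
  have hsum := (Finset.sum_le_sum fun b hb => hω b (hfin.mem_toFinset.1 hb)).trans hdisj
  rw [← Finset.mul_sum, sub_zero] at hlen
  rw [← Finset.sum_div, ← Finset.mul_sum, div_le_iff₀ (by positivity)] at hsum
  rw [div_le_iff₀ (by norm_num)]
  refine le_of_mul_le_mul_right ?_ hR
  calc loewnerConst ^ 4 * R ≤ loewnerConst ^ 4 * (112 * ∑ b ∈ W, s b) := by gcongr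
    _ ≤ _ := by linarith

/-- The largest distance of `f q` to `f x` for `q` in a closed ball about `x`. -/
def outer (f : KH ≃ₜ KH) (x : KH) (r : ℝ) : ℝ :=
  sSup ((fun q => dist (f x) (f q)) '' Metric.closedBall x r)

section outer

variable (f : KH ≃ₜ KH)

lemma isCompact_dist_image (x : KH) (r : ℝ) :
    IsCompact ((fun q => dist (f x) (f q)) '' Metric.closedBall x r) :=
  (isCompact_closedBall x r).image (continuous_const.dist f.continuous)

lemma dist_le_outer {x q : KH} {r : ℝ} (h : dist x q ≤ r) : dist (f x) (f q) ≤ outer f x r :=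
  le_csSup (isCompact_dist_image f x r).bddAbove
    (mem_image_of_mem _ (by rwa [Metric.mem_closedBall']))

lemma exists_dist_eq_outer (x : KH) {r : ℝ} (hr : 0 ≤ r) :
    ∃ q, dist x q ≤ r ∧ dist (f x) (f q) = outer f x r := by
  obtain ⟨q, hq, h⟩ := (isCompact_dist_image f x r).sSup_mem
    ((Metric.nonempty_closedBall.2 hr).image _)
  exact ⟨q, Metric.mem_closedBall'.1 hq, h⟩

lemma outer_nonneg (x : KH) {r : ℝ} (hr : 0 ≤ r) : 0 ≤ outer f x r :=
  dist_nonneg.trans (dist_le_outer f (q := x) (by simpa using hr))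

lemma kn_mk_x (a : ℝ) : kn (mk a 0 0) = |a| := by
  refine (pow_left_inj₀ (kn_nonneg _) (abs_nonneg _) (n := 4) (by norm_num)).1 ?_
  rw [kn_pow, Even.pow_abs ⟨2, rfl⟩]; simp; ring

lemma outer_pos (x : KH) {r : ℝ} (hr : 0 < r) : 0 < outer f x r := by
  have hd : dist x (x * mk r 0 0) = r := by rw [dist_mul_self, kn_mk_x, abs_of_pos hr]
  refine lt_of_lt_of_le (dist_pos.2 fun h => ?_) (dist_le_outer f hd.le)
  rw [← f.injective h, dist_self] at hd
  exact hr.ne hd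

lemma outer_mono (x : KH) {r s : ℝ} (hr : 0 ≤ r) (h : r ≤ s) : outer f x r ≤ outer f x s := by
  obtain ⟨q, hq, e⟩ := exists_dist_eq_outer f x hr
  rw [← e]
  exact dist_le_outer f (hq.trans h)

/-- `f` distorts spheres of radius `r` about `x` by at most `M`. -/
def RoundAt (M : ℝ) (x : KH) (r : ℝ) : Prop :=
  ∀ q q', dist x q ≤ r → r ≤ dist x q' → dist (f x) (f q) ≤ M * dist (f x) (f q')

variable {f}

lemma RoundAt.ball_subset {M : ℝ} (hM : 0 < M) {x : KH} {r : ℝ} (hr : 0 ≤ r) (h : RoundAt f M x r) :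
    Metric.ball (f x) (outer f x r / M) ⊆ f '' Metric.ball x r := by
  intro y hy
  refine ⟨f.symm y, ?_, f.apply_symm_apply y⟩
  by_contra hcon
  rw [Metric.mem_ball', not_lt] at hcon
  obtain ⟨q, hq, e⟩ := exists_dist_eq_outer f x hr
  have := h q (f.symm y) hq hcon
  rw [e, f.apply_symm_apply] at this
  rw [Metric.mem_ball', lt_div_iff₀ hM] at hy
  linarith

lemma RoundAt.le_volume {M : ℝ} (hM : 0 < M) {x : KH} {r : ℝ} (hr : 0 ≤ r) (h : RoundAt f M x r) :
    ENNReal.ofReal ((outer f x r / M) ^ 4) * c0 ≤ volume (f '' Metric.closedBall x r) := by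
  rw [← volume_ball (f x) (div_nonneg (outer_nonneg f x hr) hM.le)]
  exact measure_mono ((h.ball_subset hM hr).trans (image_mono Metric.ball_subset_closedBall))

/-- Every point has arbitrarily small radii at which either the volume of the image of the
concentric fifth controls the size of the image, or `f` is strongly contracting. -/
lemma exists_radius {M : ℝ} (hM : 0 < M) {x : KH} (h : ∀ᶠ r in 𝓝[>] (0 : ℝ), RoundAt f M x r)
    {δ ε : ℝ} (hδ : 0 < δ) (hε : 0 < ε) :
    ∃ r, 0 < r ∧ r < δ ∧ (ENNReal.ofReal (outer f x r ^ 4) * c0 ≤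
      ENNReal.ofReal ((10 * M) ^ 4) * volume (f '' Metric.closedBall x (r / 5)) ∨
      outer f x r ^ 4 ≤ ε * r ^ 4) := by
  obtain ⟨δ', hδ', hround⟩ := mem_nhdsGT_iff_exists_Ioo_subset.1 h
  have hδ' : 0 < δ' := hδ'
  by_contra! hcon
  set r₀ := min δ δ' / 2 with hr₀
  have hm : 0 < min δ δ' := lt_min hδ hδ'
  have hr₀pos : 0 < r₀ := by positivity
  have hsmall : ∀ r, 0 < r → r ≤ r₀ → r < δ ∧ r < δ' := fun r _ hr =>
    ⟨by linarith [min_le_left δ δ'], by linarith [min_le_right δ δ']⟩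
  have hdec : ∀ r, 0 < r → r ≤ r₀ → 10 * outer f x (r / 5) ≤ outer f x r := by
    intro r hr hrr
    have h1 := (hcon r hr (hsmall r hr hrr).1).1
    have h2 := (hround (show r / 5 ∈ Ioo 0 δ' from
      ⟨by positivity, by linarith [(hsmall r hr hrr).2]⟩) : RoundAt f M x (r / 5)).le_volume hM
      (by positivity)
    have h3 : ENNReal.ofReal ((10 * outer f x (r / 5)) ^ 4) * c0 ≤
        ENNReal.ofReal (outer f x r ^ 4) * c0 := by
      refine le_trans ?_ h1.le
      refine le_trans (le_of_eq ?_) (mul_le_mul_right h2 _)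
      rw [← mul_assoc, ← ENNReal.ofReal_mul (by positivity)]
      congr 2
      field_simp
    rw [ENNReal.mul_le_mul_iff_left c0_pos.ne' c0_lt_top.ne,
      ENNReal.ofReal_le_ofReal_iff (by have := outer_nonneg f x hr.le; positivity)] at h3
    exact le_of_pow_le_pow_left₀ (by norm_num) (outer_nonneg f x hr.le) h3
  have hiter : ∀ k : ℕ, 10 ^ k * outer f x (r₀ / 5 ^ k) ≤ outer f x r₀ := by
    intro k
    induction k with
    | zero => simp
    | succ k ih =>
      have := hdec (r₀ / 5 ^ k) (by positivity)
        (div_le_self hr₀pos.le (one_le_pow₀ (by norm_num)))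
      rw [div_div, ← pow_succ] at this
      calc 10 ^ (k + 1) * outer f x (r₀ / 5 ^ (k + 1))
          = 10 ^ k * (10 * outer f x (r₀ / 5 ^ (k + 1))) := by ring
        _ ≤ 10 ^ k * outer f x (r₀ / 5 ^ k) := by gcongr
        _ ≤ _ := ih
  set C := (outer f x r₀ / r₀) ^ 4 with hC
  have hCpos : 0 < C := by have := outer_pos f x hr₀pos; positivity
  obtain ⟨k, hk⟩ := exists_pow_lt_of_lt_one (div_pos hε hCpos) (by norm_num : (1 / 16 : ℝ) < 1)
  rw [lt_div_iff₀ hCpos] at hk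
  have hrk : 0 < r₀ / 5 ^ k := by positivity
  have h2 := (hcon (r₀ / 5 ^ k) hrk (hsmall _ hrk
    (div_le_self hr₀pos.le (one_le_pow₀ (by norm_num)))).1).2
  have h3 : outer f x (r₀ / 5 ^ k) ^ 4 ≤ (outer f x r₀ / 10 ^ k) ^ 4 := by
    refine pow_le_pow_left₀ (outer_nonneg f x hrk.le) ?_ 4
    rw [le_div_iff₀ (by positivity), mul_comm]
    exact hiter k
  have h4 : (outer f x r₀ / 10 ^ k) ^ 4 = (1 / 16) ^ k * C * (r₀ / 5 ^ k) ^ 4 := by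
    have e : (10 : ℝ) ^ k = 2 ^ k * 5 ^ k := by rw [← mul_pow]; norm_num
    have e' : (16 : ℝ) ^ k = (2 ^ k) ^ 4 := by rw [← pow_mul, mul_comm, pow_mul]; norm_num
    rw [hC, e, one_div, inv_pow, e']
    field_simp
  have h5 : (1 / 16) ^ k * C * (r₀ / 5 ^ k) ^ 4 ≤ ε * (r₀ / 5 ^ k) ^ 4 := by gcongr
  linarith

end outer

/-- Summation of volumes of images of disjoint balls. -/
lemma sum_le_of_volume {f : KH ≃ₜ KH} {I : Finset KH} {ρ a : KH → ℝ} (ha : ∀ i ∈ I, 0 ≤ a i)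
    (hd : (I : Set KH).PairwiseDisjoint fun i => Metric.closedBall i (ρ i)) {A : Set KH} {C V : ℝ}
    (hC : 0 ≤ C) (hV : 0 ≤ V) (hA : volume A ≤ ENNReal.ofReal V * c0)
    (hsub : ∀ i ∈ I, f '' Metric.closedBall i (ρ i) ⊆ A)
    (hle : ∀ i ∈ I, ENNReal.ofReal (a i) * c0 ≤
      ENNReal.ofReal C * volume (f '' Metric.closedBall i (ρ i))) : ∑ i ∈ I, a i ≤ C * V := by
  rw [← ENNReal.ofReal_le_ofReal_iff (by positivity),
    ← ENNReal.mul_le_mul_iff_left c0_pos.ne' c0_lt_top.ne,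
    ENNReal.ofReal_sum_of_nonneg ha, Finset.sum_mul]
  calc ∑ i ∈ I, ENNReal.ofReal (a i) * c0
      ≤ ∑ i ∈ I, ENNReal.ofReal C * volume (f '' Metric.closedBall i (ρ i)) :=
        Finset.sum_le_sum hle
    _ = ENNReal.ofReal C * volume (⋃ i ∈ I, f '' Metric.closedBall i (ρ i)) := by
        rw [← Finset.mul_sum, measure_biUnion_finset]
        · intro i hi j hj hij
          exact (disjoint_image_iff f.injective).2 (hd hi hj hij)
        · intro i _
          exact (f.isClosedMap _ Metric.isClosed_closedBall).measurableSet
    _ ≤ ENNReal.ofReal C * (ENNReal.ofReal V * c0) := by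
        gcongr
        exact (measure_mono (iUnion₂_subset hsub)).trans hA
    _ = _ := by rw [← mul_assoc, ENNReal.ofReal_mul hC]

lemma exists_modulus {Y : Type*} [PseudoMetricSpace Y] {g : KH → Y} (hg : Continuous g) {K : Set KH}
    (hK : IsCompact K) {ε : ℝ} (hε : 0 < ε) :
    ∃ δ > 0, ∀ p ∈ K, ∀ q, dist p q < δ → dist (g p) (g q) < ε := by
  have := hK.uniformContinuousAt_of_continuousAt g (fun a _ => hg.continuousAt)
    (Metric.dist_mem_uniformity hε)
  obtain ⟨δ, hδ, h⟩ := Metric.mem_uniformity_dist.1 this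
  exact ⟨δ, hδ, fun p hp q hpq => h hpq hp⟩

/-- The distance of `f p` to `f x`, clamped to the interval from `l` to `2 ^ n * l`. -/
def clampDist (f : KH ≃ₜ KH) (x : KH) (l : ℝ) (n : ℕ) (p : KH) : ℝ :=
  max l (min (2 ^ n * l) (dist (f x) (f p)))

/-- The logarithmic ring function. -/
def ringFn (f : KH ≃ₜ KH) (x : KH) (l : ℝ) (n : ℕ) (p : KH) : ℝ :=
  (Real.log (clampDist f x l n p) - Real.log l) / (n * Real.log 2)

section ringFn

variable {f : KH ≃ₜ KH} {x : KH} {l : ℝ} {n : ℕ}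

lemma le_clampDist (p : KH) : l ≤ clampDist f x l n p := le_max_left _ _

lemma continuous_ringFn (hl : 0 < l) : Continuous (ringFn f x l n) := by
  have h : Continuous (clampDist f x l n) :=
    continuous_const.max (continuous_const.min (continuous_const.dist f.continuous))
  exact ((h.log fun p => (hl.trans_le (le_clampDist p)).ne').sub continuous_const).div_const _

lemma ringFn_of_le {p : KH} (h : dist (f x) (f p) ≤ l) : ringFn f x l n p = 0 := by
  have : clampDist f x l n p = l := max_eq_left ((min_le_right _ _).trans h)
  simp [ringFn, this]

lemma clampDist_of_ge (hl : 0 < l) {p : KH} (h : 2 ^ n * l ≤ dist (f x) (f p)) :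
    clampDist f x l n p = 2 ^ n * l := by
  unfold clampDist
  rw [min_eq_left h, max_eq_right (le_mul_of_one_le_left hl.le (one_le_pow₀ (by norm_num)))]

lemma ringFn_of_ge (hl : 0 < l) (hn : n ≠ 0) {p : KH} (h : 2 ^ n * l ≤ dist (f x) (f p)) :
    ringFn f x l n p = 1 := by
  have h2 : 0 < Real.log 2 := Real.log_pos (by norm_num)
  unfold ringFn
  rw [clampDist_of_ge hl h, Real.log_mul (by positivity) hl.ne', Real.log_pow, add_sub_cancel_right,
    div_self (by positivity)]

lemma abs_clampDist_sub_le (p q : KH) :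
    |clampDist f x l n p - clampDist f x l n q| ≤ dist (f p) (f q) := by
  unfold clampDist
  refine (abs_max_sub_max_le_max _ _ _ _).trans (max_le (by simp) ?_)
  refine (abs_min_sub_min_le_max _ _ _ _).trans (max_le (by simp) ?_)
  rw [dist_comm (f x), dist_comm (f x)]
  exact abs_dist_sub_le _ _ _

lemma abs_log_sub_log_le {a b c : ℝ} (hc : 0 < c) (ha : c ≤ a) (hb : c ≤ b) :
    |Real.log a - Real.log b| ≤ |a - b| / c := by
  wlog hab : b ≤ a generalizing a b
  · rw [abs_sub_comm, abs_sub_comm a]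
    exact this hb ha (le_of_not_ge hab)
  have hb0 := hc.trans_le hb
  have ha0 := hc.trans_le ha
  rw [abs_of_nonneg (sub_nonneg.2 (Real.log_le_log hb0 hab)), abs_of_nonneg (sub_nonneg.2 hab),
    ← Real.log_div ha0.ne' hb0.ne']
  calc Real.log (a / b) ≤ a / b - 1 := Real.log_le_sub_one_of_pos (by positivity)
    _ = (a - b) / b := by field_simp
    _ ≤ (a - b) / c := div_le_div_of_nonneg_left (sub_nonneg.2 hab) hc hb

lemma abs_ringFn_sub_le (hl : 0 < l) (hn : n ≠ 0) {i p q : KH} {L : ℝ} (hL : L ≤ l / 4)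
    (hp : dist (f i) (f p) ≤ L) (hq : dist (f i) (f q) ≤ L) :
    |ringFn f x l n p - ringFn f x l n q| ≤
      4 * L / (n * Real.log 2 * clampDist f x l n i) := by
  have h2 : 0 < Real.log 2 := Real.log_pos (by norm_num)
  have hn' : (0 : ℝ) < n := by positivity
  have he := le_clampDist (f := f) (x := x) (l := l) (n := n) i
  have hlow : ∀ s, dist (f i) (f s) ≤ L → clampDist f x l n i / 2 ≤ clampDist f x l n s := by
    intro s hs
    have := abs_le.1 ((abs_clampDist_sub_le (f := f) (x := x) (l := l) (n := n) i s).trans hs)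
    linarith [this.2]
  have e : ringFn f x l n p - ringFn f x l n q =
      (Real.log (clampDist f x l n p) - Real.log (clampDist f x l n q)) / (n * Real.log 2) := by
    unfold ringFn; ring
  rw [e, abs_div, abs_of_pos (by positivity : 0 < n * Real.log 2)]
  have h1 := abs_log_sub_log_le (by linarith : 0 < clampDist f x l n i / 2) (hlow p hp) (hlow q hq)
  have h3 : |clampDist f x l n p - clampDist f x l n q| ≤ 2 * L :=
    (abs_clampDist_sub_le p q).trans (by linarith [dist_triangle_left (f p) (f q) (f i)])
  have h4 : |Real.log (clampDist f x l n p) - Real.log (clampDist f x l n q)| ≤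
      4 * L / clampDist f x l n i := by
    refine h1.trans ((div_le_div_of_nonneg_right h3 (by linarith)).trans (le_of_eq ?_))
    have : clampDist f x l n i ≠ 0 := by linarith
    field_simp; ring
  rw [div_le_iff₀ (by positivity)]
  refine h4.trans (le_of_eq ?_)
  have : clampDist f x l n i ≠ 0 := by linarith
  field_simp

/-- Dyadic decomposition of the weight of the ring function. -/
lemma inv_clampDist_pow_le (hl : 0 < l) {i : KH} (hi : dist (f x) (f i) ≤ 2 ^ (n + 1) * l) :
    (clampDist f x l n i ^ 4)⁻¹ ≤ ∑ k ∈ Finset.range (n + 1),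
      if dist (f x) (f i) ≤ 2 ^ (k + 1) * l then 16 * ((2 ^ k * l) ^ 4)⁻¹ else 0 := by
  classical
  have hex : ∃ k, dist (f x) (f i) ≤ 2 ^ (k + 1) * l := ⟨n, hi⟩
  set k := Nat.find hex with hk
  have hkn : k ≤ n := Nat.find_min' hex hi
  have hks : dist (f x) (f i) ≤ 2 ^ (k + 1) * l := Nat.find_spec hex
  have he : 2 ^ k * l / 2 ≤ clampDist f x l n i := by
    rcases Nat.eq_zero_or_pos k with h0 | h0
    · rw [h0, pow_zero, one_mul]
      exact le_trans (by linarith) (le_clampDist i)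
    · have hlt : 2 ^ k * l < dist (f x) (f i) := by
        have := Nat.find_min hex (m := k - 1) (by omega)
        rwa [Nat.sub_add_cancel h0, not_le] at this
      refine le_trans (le_min ?_ (by linarith [dist_nonneg (x := f x) (y := f i)]))
        (le_max_right _ _)
      have : (2 : ℝ) ^ k ≤ 2 ^ n := pow_le_pow_right₀ (by norm_num) hkn
      nlinarith [pow_pos (by norm_num : (0 : ℝ) < 2) k]
  refine le_trans ?_ (Finset.single_le_sum (f := fun k =>
    if dist (f x) (f i) ≤ 2 ^ (k + 1) * l then 16 * ((2 ^ k * l) ^ 4)⁻¹ else 0)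
    (fun j _ => by split_ifs <;> positivity) (Finset.mem_range.2 (Nat.lt_succ_of_le hkn)))
  simp only [hks, if_true]
  have hp : 0 < 2 ^ k * l := by positivity
  calc (clampDist f x l n i ^ 4)⁻¹ ≤ ((2 ^ k * l / 2) ^ 4)⁻¹ := by gcongr
    _ = _ := by field_simp; norm_num

end ringFn

open Classical in
/-- The ring function has small energy with respect to suitable covers. -/
lemma exists_oscData_ringFn {f : KH ≃ₜ KH} {M : ℝ} (hM : 0 < M)
    (hf : ∀ x, ∀ᶠ r in 𝓝[>] (0 : ℝ), RoundAt f M x r) (x : KH) {l S η κ : ℝ} (hl : 0 < l)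
    (hS : 0 < S) (hη : 0 < η) (hκ : 0 < κ) {n : ℕ} (hn : n ≠ 0) :
    ∃ (I : Finset KH) (r o : KH → ℝ), OscData (ringFn f x l n) I r o η ∧
      ((I : Set KH).PairwiseDisjoint fun i => Metric.closedBall i (r i / 5)) ∧
      Metric.closedBall x S ⊆ (⋃ i ∈ I, Metric.ball i (r i)) ∧
      ∑ i ∈ I, o i ^ 4 ≤ 10616832 * (10 * M) ^ 4 / n + κ := by
  have hK := isCompact_closedBall x S
  obtain ⟨δ, hδ, hmod⟩ := exists_modulus f.continuous hK (by positivity : 0 < l / 4)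
  have hlog : 1 / 2 ≤ Real.log 2 := by linarith [Real.log_two_gt_d9]
  have hn' : (1 : ℝ) ≤ n := by exact_mod_cast Nat.one_le_iff_ne_zero.2 hn
  set Λ : ℝ := n * Real.log 2 with hΛ
  have hΛn : n / 2 ≤ Λ := by rw [hΛ]; nlinarith
  have hΛpos : 0 < Λ := by linarith
  set ε : ℝ := κ / ((4 / Λ) ^ 4 * (5 * (S + η)) ^ 4 * (l ^ 4)⁻¹) with hε
  have hεpos : 0 < ε := by positivity
  choose r hr0 hrδ hr using fun i => exists_radius hM (hf i) (lt_min hδ hη) hεpos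
  obtain ⟨I, hIK, hd, hcov⟩ := exists_finset_cover hK r hr0
  set L : KH → ℝ := fun i => outer f i (r i) with hL
  have hL0 : ∀ i, 0 ≤ L i := fun i => outer_nonneg f i (hr0 i).le
  have hLl : ∀ i ∈ I, L i ≤ l / 4 := by
    intro i hi
    obtain ⟨q, hq, e⟩ := exists_dist_eq_outer f i (hr0 i).le
    simp only [hL]
    rw [← e]
    exact (hmod i (hIK hi) q (hq.trans_lt ((hrδ i).trans_le (min_le_left _ _)))).le
  set e : KH → ℝ := clampDist f x l n with he
  have hel : ∀ i, l ≤ e i := le_clampDist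
  have he0 : ∀ i, 0 < e i := fun i => hl.trans_le (hel i)
  set o : KH → ℝ := fun i =>
    if dist (f x) (f i) ≤ 2 ^ (n + 1) * l then 4 * L i / (Λ * e i) else 0 with ho
  have hball : ∀ i, ∀ p ∈ Metric.ball i (r i), dist (f i) (f p) ≤ L i := fun i p hp =>
    dist_le_outer f (Metric.mem_ball'.1 hp).le
  refine ⟨I, r, o, ⟨fun i _ => hr0 i, fun i _ => ((hrδ i).trans_le (min_le_right _ _)).le,
    fun i _ => ?_, fun i hi p hp q hq => ?_⟩, hd, hcov, ?_⟩
  · have := hL0 i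
    have := he0 i
    simp only [ho]
    split_ifs <;> positivity
  · simp only [ho]
    split_ifs with hdist
    · exact abs_ringFn_sub_le hl hn (hLl i hi) (hball i p hp) (hball i q hq)
    · have hfar : ∀ s ∈ Metric.ball i (r i), 2 ^ n * l ≤ dist (f x) (f s) := by
        intro s hs
        have h1 := hball i s hs
        have h2 := dist_triangle_right (f x) (f i) (f s)
        have h3 : l ≤ 2 ^ n * l := le_mul_of_one_le_left hl.le (one_le_pow₀ (by norm_num))
        rw [pow_succ] at hdist
        have := hLl i hi
        linarith
      rw [ringFn_of_ge hl hn (hfar p hp), ringFn_of_ge hl hn (hfar q hq)]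
      simp
  · let good : KH → Prop := fun i => ENNReal.ofReal (outer f i (r i) ^ 4) * c0 ≤
      ENNReal.ofReal ((10 * M) ^ 4) * volume (f '' Metric.closedBall i (r i / 5))
    set g : KH → ℝ := fun i => if good i then L i ^ 4 else 0 with hg
    have hg0 : ∀ i, 0 ≤ g i := fun i => by
      have := hL0 i
      simp only [hg]; split_ifs <;> positivity
    have hLg : ∀ i, L i ^ 4 ≤ g i + ε * r i ^ 4 := by
      intro i
      have := hr0 i
      simp only [hg]
      split_ifs with h
      · have : 0 ≤ ε * r i ^ 4 := by positivity
        linarith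
      · rw [zero_add]; exact (hr i).resolve_left h
    have hshell : ∀ k : ℕ, ∑ i ∈ I with dist (f x) (f i) ≤ 2 ^ (k + 1) * l, g i ≤
        (10 * M) ^ 4 * (3 * (2 ^ k * l)) ^ 4 := by
      intro k
      have hlk : l ≤ 2 ^ k * l := le_mul_of_one_le_left hl.le (one_le_pow₀ (by norm_num))
      refine sum_le_of_volume (f := f) (ρ := fun i => r i / 5) (fun i _ => hg0 i)
        (hd.subset (Finset.coe_subset.2 (Finset.filter_subset _ _)))
        (A := Metric.ball (f x) (3 * (2 ^ k * l))) (by positivity)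
        (by positivity) (volume_ball _ (by positivity)).le ?_ ?_
      · rintro i hi _ ⟨p, hp, rfl⟩
        obtain ⟨hiI, hi2⟩ := Finset.mem_filter.1 hi
        rw [Metric.mem_closedBall'] at hp
        have h1 : dist (f i) (f p) ≤ L i := dist_le_outer f (by linarith [hr0 i])
        rw [Metric.mem_ball']
        rw [pow_succ] at hi2
        linarith [hLl i hiI, dist_triangle (f x) (f i) (f p)]
      · intro i _
        simp only [hg]
        split_ifs with h
        · exact h
        · simp
    have hsumg : ∑ i ∈ I with dist (f x) (f i) ≤ 2 ^ (n + 1) * l, g i * (e i ^ 4)⁻¹ ≤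
        1296 * (10 * M) ^ 4 * (n + 1) := by
      calc ∑ i ∈ I with dist (f x) (f i) ≤ 2 ^ (n + 1) * l, g i * (e i ^ 4)⁻¹
          ≤ ∑ i ∈ I with dist (f x) (f i) ≤ 2 ^ (n + 1) * l, g i * ∑ k ∈ Finset.range (n + 1),
            (if dist (f x) (f i) ≤ 2 ^ (k + 1) * l then 16 * ((2 ^ k * l) ^ 4)⁻¹ else 0) :=
            Finset.sum_le_sum fun i hi => mul_le_mul_of_nonneg_left
              (inv_clampDist_pow_le hl (Finset.mem_filter.1 hi).2) (hg0 i)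
        _ ≤ ∑ i ∈ I, g i * ∑ k ∈ Finset.range (n + 1),
            (if dist (f x) (f i) ≤ 2 ^ (k + 1) * l then 16 * ((2 ^ k * l) ^ 4)⁻¹ else 0) :=
            Finset.sum_le_sum_of_subset_of_nonneg (Finset.filter_subset _ _) fun i _ _ =>
              mul_nonneg (hg0 i) (Finset.sum_nonneg fun k _ => by split_ifs <;> positivity)
        _ = ∑ k ∈ Finset.range (n + 1), 16 * ((2 ^ k * l) ^ 4)⁻¹ *
            ∑ i ∈ I with dist (f x) (f i) ≤ 2 ^ (k + 1) * l, g i := by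
            simp only [Finset.mul_sum]
            rw [Finset.sum_comm]
            refine Finset.sum_congr rfl fun k _ => ?_
            rw [Finset.sum_filter]
            refine Finset.sum_congr rfl fun i _ => ?_
            split_ifs <;> ring
        _ ≤ ∑ k ∈ Finset.range (n + 1), 1296 * (10 * M) ^ 4 := by
            refine Finset.sum_le_sum fun k _ => ?_
            refine (mul_le_mul_of_nonneg_left (hshell k) (by positivity)).trans (le_of_eq ?_)
            field_simp; norm_num
        _ = _ := by simp; ring
    have hsumr : ∑ i ∈ I, r i ^ 4 ≤ (5 * (S + η)) ^ 4 := by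
      refine sum_radii_le (fun i _ => (hr0 i).le) hd (A := Metric.closedBall x (S + η))
        (volume_closedBall _ (by positivity)).le fun i hi p hp => ?_
      have h1 := Metric.mem_closedBall.1 (hIK hi)
      have h2 := (hrδ i).trans_le (min_le_right _ _)
      rw [Metric.mem_closedBall] at *
      linarith [dist_triangle p i x, hr0 i]
    have hmain : ∑ i ∈ I, o i ^ 4 ≤ (4 / Λ) ^ 4 * (1296 * (10 * M) ^ 4 * (n + 1)) +
        (4 / Λ) ^ 4 * (ε * (5 * (S + η)) ^ 4 * (l ^ 4)⁻¹) := by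
      calc ∑ i ∈ I, o i ^ 4
          = ∑ i ∈ I with dist (f x) (f i) ≤ 2 ^ (n + 1) * l, (4 / Λ) ^ 4 *
              (L i ^ 4 * (e i ^ 4)⁻¹) := by
            rw [Finset.sum_filter]
            refine Finset.sum_congr rfl fun i _ => ?_
            simp only [ho]
            have := (he0 i).ne'
            split_ifs
            · field_simp
            · simp
        _ ≤ ∑ i ∈ I with dist (f x) (f i) ≤ 2 ^ (n + 1) * l, (4 / Λ) ^ 4 *
              (g i * (e i ^ 4)⁻¹ + ε * r i ^ 4 * (l ^ 4)⁻¹) := by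
            refine Finset.sum_le_sum fun i _ => ?_
            gcongr
            have h1 := mul_le_mul_of_nonneg_right (hLg i)
              (by have := he0 i; positivity : 0 ≤ (e i ^ 4)⁻¹)
            have h2 : ε * r i ^ 4 * (e i ^ 4)⁻¹ ≤ ε * r i ^ 4 * (l ^ 4)⁻¹ := by
              have := hr0 i
              have := hel i
              gcongr
            linarith
        _ = (4 / Λ) ^ 4 * (∑ i ∈ I with dist (f x) (f i) ≤ 2 ^ (n + 1) * l, g i * (e i ^ 4)⁻¹) +
              (4 / Λ) ^ 4 * (ε * (∑ i ∈ I with dist (f x) (f i) ≤ 2 ^ (n + 1) * l, r i ^ 4) *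
                (l ^ 4)⁻¹) := by
            rw [← Finset.mul_sum, Finset.sum_add_distrib, mul_add]
            congr 2
            rw [Finset.mul_sum, Finset.sum_mul]
        _ ≤ _ := by
            gcongr
            refine (Finset.sum_le_sum_of_subset_of_nonneg (Finset.filter_subset _ _)
              fun i _ _ => ?_).trans hsumr
            have := hr0 i
            positivity
    refine hmain.trans (add_le_add ?_ (le_of_eq ?_))
    · have h1 : 4 / Λ ≤ 8 / n := by
        rw [div_le_div_iff₀ hΛpos (by positivity)]; linarith
      calc (4 / Λ) ^ 4 * (1296 * (10 * M) ^ 4 * (n + 1))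
          ≤ (8 / n) ^ 4 * (1296 * (10 * M) ^ 4 * (2 * n)) := by
            gcongr
            linarith
        _ = 10616832 * (10 * M) ^ 4 / n * (1 / n) ^ 2 := by field_simp; norm_num
        _ ≤ 10616832 * (10 * M) ^ 4 / n * 1 := by
            gcongr
            exact pow_le_one₀ (by positivity) (by rw [div_le_one (by positivity)]; exact hn')
        _ = _ := mul_one _
    · rw [hε]; field_simp

lemma mean_one_sub {u : KH → ℝ} (hu : Continuous u) (x : KH) {R : ℝ} (hR : 0 < R) :
    mean (fun p => 1 - u p) x R = 1 - mean u x R := by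
  have hc : 0 < c0.toReal := ENNReal.toReal_pos c0_pos.ne' c0_lt_top.ne
  have hfin : IsFiniteMeasure (volume.restrict (Metric.ball x R)) :=
    ⟨by rw [Measure.restrict_apply_univ]; exact measure_ball_lt_top⟩
  unfold mean
  rw [setAverage_eq, setAverage_eq, integral_sub (integrable_const _) (integrableOn_ball hu x R),
    integral_const, measureReal_restrict_apply_univ,
    volume_real_ball _ hR.le]
  simp only [smul_eq_mul]
  field_simp

/-- Quasiconformal maps of the Heisenberg group are weakly quasisymmetric. -/
theorem exists_weak_quasisymmetry {f : KH ≃ₜ KH} {M : ℝ} (hM : 0 < M)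
    (hf : ∀ x, ∀ᶠ r in 𝓝[>] (0 : ℝ), RoundAt f M x r) :
    ∃ H : ℝ, 1 ≤ H ∧ ∀ x a b, dist x a ≤ dist x b → dist (f x) (f a) ≤ H * dist (f x) (f b) := by
  set κ : ℝ := loewnerConst ^ 4 / 448 with hκ
  have hκpos : 0 < κ := by have := loewnerConst_pos; positivity
  obtain ⟨n, hn⟩ := exists_nat_gt (4 * (10616832 * (10 * M) ^ 4) / κ)
  have hnpos : (0 : ℝ) < n := lt_of_le_of_lt (by positivity) hn
  have hn0 : n ≠ 0 := by rintro rfl; simp at hnpos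
  have hnκ : 10616832 * (10 * M) ^ 4 / n ≤ κ / 4 := by
    rw [div_lt_iff₀ hκpos] at hn
    rw [div_le_iff₀ hnpos]
    linarith
  refine ⟨2 ^ n, one_le_pow₀ (by norm_num), fun x a b hab => ?_⟩
  by_contra! hcon
  set R := dist x b with hR
  set l := dist (f x) (f b) with hl
  have hRpos : 0 < R := by
    rcases (dist_nonneg (x := x) (y := b)).eq_or_lt with h | h
    · exfalso
      rw [← hR] at h
      have hb : x = b := dist_eq_zero.1 (by rw [← hR]; exact h.symm)
      have ha : x = a := dist_le_zero.1 (by rw [← h] at hab; exact hab)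
      rw [hl, ← ha, ← hb] at hcon
      simp at hcon
    · exact h
  have hlpos : 0 < l := by
    rw [hl, dist_pos]
    intro h
    rw [hR, f.injective h, dist_self] at hRpos
    exact lt_irrefl _ hRpos
  set u := ringFn f x l n with hu
  have huc : Continuous u := continuous_ringFn hlpos
  obtain ⟨δ, hδ, hmod⟩ := exists_modulus huc (isCompact_closedBall x (2 * R))
    (by norm_num : (0 : ℝ) < 1 / 8)
  obtain ⟨N, hN⟩ : ∃ N : ℕ, 4 * R / 2 ^ N < δ := by
    obtain ⟨N, hN⟩ := exists_pow_lt_of_lt_one (by positivity : 0 < δ / (4 * R))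
      (by norm_num : (1 / 2 : ℝ) < 1)
    refine ⟨N, ?_⟩
    rw [lt_div_iff₀ (by positivity)] at hN
    rw [div_eq_mul_inv, ← inv_pow, ← one_div, mul_comm]
    exact hN
  obtain ⟨I, r, o, hI, hd, hcov, hsum⟩ := exists_oscData_ringFn hM hf x hlpos
    (by positivity : 0 < 54 * R) (by positivity : 0 < 4 * R / 2 ^ N)
    (by positivity : 0 < κ / 4) hn0
  have hlt : ∑ i ∈ I, o i ^ 4 < κ := by linarith
  rcases le_total (1 / 2) (mean u x (2 * R)) with hm | hm
  · set c : ℝ → KH := fun t => f.symm (f x * dil t ((f x)⁻¹ * f b)) with hc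
    have hcc : Continuous c :=
      f.symm.continuous.comp ((continuous_const_mul _).comp (continuous_dil _))
    refine absurd (loewner (K := {p | p ∈ Metric.closedBall x (2 * R) ∧ u p = 0})
      huc hRpos hI hd hcov hm (fun p hp => hp.1) ?_ (LipschitzWith.dist_right x) ?_) (not_le.2 hlt)
    · intro p hp q hq
      have := hmod p hp.1 q ((Metric.mem_ball'.1 hq).trans hN)
      rw [hp.2, Real.dist_eq, zero_sub, abs_neg] at this
      exact this.le
    · intro v hv
      have hivt := intermediate_value_Icc (zero_le_one' ℝ)
        (continuous_const.dist hcc : Continuous fun t => dist x (c t)).continuousOn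
      have e0 : dist x (c 0) = 0 := by simp [hc, dil_zero]
      have e1 : dist x (c 1) = R := by simp [hc, dil_one, hR]
      simp only [e0, e1] at hivt
      obtain ⟨t, ht, rfl⟩ := hivt hv
      refine ⟨c t, ⟨?_, ?_⟩, rfl⟩
      · rw [Metric.mem_closedBall']; linarith [hv.2]
      · refine ringFn_of_le ?_
        simp only [hc, f.apply_symm_apply]
        rw [dist_mul_self, kn_dil ht.1, ← dist_def, dist_comm]
        exact mul_le_of_le_one_left hlpos.le ht.2
  · set c : ℝ → KH := fun t => f.symm (f x * dil t ((f x)⁻¹ * f a)) with hc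
    have hcc : Continuous c :=
      f.symm.continuous.comp ((continuous_const_mul _).comp (continuous_dil _))
    have hI' : OscData (fun p => 1 - u p) I r o (4 * R / 2 ^ N) :=
      ⟨hI.pos, hI.le, hI.nonneg, fun i hi p hp q hq => by
        rw [sub_sub_sub_cancel_left]; exact hI.osc i hi q hq p hp⟩
    have hLpos : 0 < dist (f x) (f a) := lt_of_le_of_lt (by positivity) hcon
    have hfc : ∀ t, 0 ≤ t → dist (f x) (f (c t)) = t * dist (f x) (f a) := by
      intro t ht
      simp only [hc, f.apply_symm_apply]
      rw [dist_mul_self, kn_dil ht, ← dist_def, dist_comm]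
    obtain ⟨T, hT1, hT⟩ : ∃ T, 1 ≤ T ∧ R ≤ dist a (c T) := by
      by_contra! hbd
      set B := outer f a R with hB
      set T := max 1 ((dist (f x) (f a) + B) / dist (f x) (f a) + 1) with hT
      have h1 := dist_le_outer f (hbd T (le_max_left _ _)).le
      have h2 := hfc T (zero_le_one.trans (le_max_left _ _))
      have h3 : (dist (f x) (f a) + B) / dist (f x) (f a) < T :=
        (lt_add_one _).trans_le (le_max_right _ _)
      rw [div_lt_iff₀ hLpos, ← h2] at h3
      linarith [dist_triangle (f x) (f a) (f (c T))]
    refine absurd (loewner (u := fun p => 1 - u p) (h := dist a)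
      (K := {p | p ∈ Metric.closedBall x (2 * R) ∧ u p = 1})
      (continuous_const.sub huc) hRpos hI' hd hcov
      (by rw [mean_one_sub huc x (by positivity)]; linarith) (fun p hp => hp.1) ?_
      (LipschitzWith.dist_right a) ?_) (not_le.2 hlt)
    · intro p hp q hq
      have := hmod p hp.1 q ((Metric.mem_ball'.1 hq).trans hN)
      rw [hp.2, Real.dist_eq] at this
      exact this.le
    · intro v hv
      have hivt := intermediate_value_Icc hT1
        (continuous_const.dist hcc : Continuous fun t => dist a (c t)).continuousOn
      have e0 : dist a (c 1) = 0 := by simp [hc, dil_one]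
      simp only [e0] at hivt
      obtain ⟨t, ht, rfl⟩ := hivt ⟨hv.1, hv.2.trans hT⟩
      refine ⟨c t, ⟨?_, ?_⟩, rfl⟩
      · rw [Metric.mem_closedBall']; linarith [hv.2, dist_triangle x a (c t)]
      · refine ringFn_of_ge hlpos hn0 ?_
        rw [hfc t (by linarith [ht.1])]
        have := le_mul_of_one_le_left hLpos.le ht.1
        linarith

/-- Weak quasisymmetry with constant `H`. -/
def WeakQS (f : KH ≃ₜ KH) (H : ℝ) : Prop :=
  ∀ x a b, dist x a ≤ dist x b → dist (f x) (f a) ≤ H * dist (f x) (f b)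

section WeakQS

variable {f : KH ≃ₜ KH} {H : ℝ}

lemma WeakQS.roundAt (hf : WeakQS f H) (x : KH) (r : ℝ) : RoundAt f H x r :=
  fun q q' h1 h2 => hf x q q' (h1.trans h2)

lemma WeakQS.outer_le_of_dist_le (hf : WeakQS f H) (hH : 1 ≤ H) {x y : KH} {r : ℝ} (hr : 0 < r)
    (hxy : dist x y ≤ r) : outer f y r ≤ 2 * H * outer f x r := by
  obtain ⟨q, hq, hyq⟩ : ∃ q, dist x q ≤ r ∧ r ≤ dist y q := by
    by_contra! hcon
    have h1 : dist x (x * mk r 0 0) = r := by rw [dist_mul_self, kn_mk_x, abs_of_pos hr]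
    have h2 : dist x (x * mk (-r) 0 0) = r := by rw [dist_mul_self, kn_mk_x, abs_neg, abs_of_pos hr]
    have h3 : dist (x * mk r 0 0) (x * mk (-r) 0 0) = 2 * r := by
      rw [dist_mul_left', dist_def]
      have : (mk (-r) 0 0)⁻¹ * mk r 0 0 = mk (2 * r) 0 0 := by
        ext <;> simp
        ring
      rw [this, kn_mk_x, abs_of_pos (by positivity)]
    linarith [hcon _ h1.le, hcon _ h2.le, dist_triangle_left (x * mk r 0 0) (x * mk (-r) 0 0) y]
  obtain ⟨p, hp, e⟩ := exists_dist_eq_outer f y hr.le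
  rw [← e]
  have h1 := hf y p q (hp.trans hyq)
  have h2 := dist_triangle_left (f y) (f q) (f x)
  have h3 := dist_le_outer f hxy
  have h4 := dist_le_outer f hq
  nlinarith

lemma WeakQS.outer_mul_le (hf : WeakQS f H) (hH : 1 ≤ H) (x : KH) {r : ℝ} (hr : 0 < r) (m : ℕ) :
    outer f x (m * r) ≤ 6 * m * (2 * H) ^ (6 * m) * outer f x r := by
  obtain ⟨y, hy, e⟩ := exists_dist_eq_outer f x (by positivity : 0 ≤ m * r)
  rw [← e]
  have hy' : kn (x⁻¹ * y) ≤ m * r := by rwa [← dist_def, dist_comm]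
  obtain ⟨γ, hγ, hγ0, hγT⟩ := reach_of_kn_le _ hy'
  set c : ℕ → KH := fun j => x * γ (j * r) with hc
  have hstep : ∀ j, dist (c j) (c (j + 1)) ≤ r := by
    intro j
    simp only [hc, dist_mul_left']
    refine (hγ.dist_le_mul _ _).trans (le_of_eq ?_)
    rw [NNReal.coe_one, one_mul, Real.dist_eq, abs_sub_comm]
    push_cast
    rw [show (j + 1) * r - j * r = r by ring, abs_of_pos hr]
  have hc0 : c 0 = x := by simp [hc, hγ0]
  have hcm : c (6 * m) = y := by
    simp only [hc]
    rw [hγT _ (by push_cast; linarith)]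
    simp
  have hout : ∀ j, outer f (c j) r ≤ (2 * H) ^ j * outer f x r := by
    intro j
    induction j with
    | zero => simp [hc0]
    | succ j ih =>
      refine (hf.outer_le_of_dist_le hH hr (hstep j)).trans ?_
      rw [pow_succ, mul_comm _ (2 * H), mul_assoc (2 * H)]
      gcongr
  have ho := outer_nonneg f x hr.le
  have htel := dist_le_range_sum_dist (fun j => f (c j)) (6 * m)
  simp only [hc0, hcm] at htel
  refine htel.trans ?_
  calc ∑ j ∈ Finset.range (6 * m), dist (f (c j)) (f (c (j + 1)))
      ≤ ∑ j ∈ Finset.range (6 * m), (2 * H) ^ (6 * m) * outer f x r := by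
        refine Finset.sum_le_sum fun j hj => ?_
        refine (dist_le_outer f (hstep j)).trans ((hout j).trans ?_)
        gcongr
        · linarith
        · exact (Finset.mem_range.1 hj).le
    _ = _ := by simp; ring

lemma WeakQS.outer_div_pow_le (hf : WeakQS f H) (hH : 1 ≤ H) (x : KH) {r : ℝ} (hr : 0 < r) (m : ℕ) :
    (m + 1) * outer f x (r / 2 ^ m) ^ 4 ≤ (4 * H ^ 2 * outer f x r) ^ 4 := by
  have hrm : 0 < r / 2 ^ m := by positivity
  set τ := outer f x (r / 2 ^ m) / H ^ 2 with hτ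
  have hτ0 : 0 < τ := by have := outer_pos f x hrm; positivity
  have hmono := outer_mono f x hrm.le (div_le_self hr.le (one_le_pow₀ (by norm_num)))
  have hτle : τ ≤ outer f x r :=
    (div_le_self (outer_nonneg f x hrm.le) (one_le_pow₀ hH)).trans hmono
  set a : ℕ → KH := fun j => x * mk (r / 2 ^ j) 0 0 with ha
  have hxa : ∀ j, dist x (a j) = r / 2 ^ j := fun j => by
    simp only [ha]; rw [dist_mul_self, kn_mk_x, abs_of_pos (by positivity)]
  have haa : ∀ i j, i < j → r / 2 ^ j ≤ dist (a j) (a i) := by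
    intro i j hij
    have h1 := hxa i
    have h2 := hxa j
    have h3 := dist_triangle x (a j) (a i)
    have h4 : r / 2 ^ j ≤ r / 2 ^ (i + 1) := by gcongr; norm_num; omega
    have h5 : r / 2 ^ (i + 1) = r / 2 ^ i / 2 := by rw [pow_succ]; field_simp
    linarith
  have hsep : ∀ i j, i < j → j ≤ m → τ ≤ dist (f (a j)) (f (a i)) := by
    intro i j hij hj
    have h1 := hf (a j) x (a i) (by rw [dist_comm, hxa]; exact haa i j hij)
    obtain ⟨q, hq, e⟩ := exists_dist_eq_outer f x hrm.le
    have h2 := hf x q (a j) (hq.trans (by rw [hxa]; gcongr; norm_num))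
    rw [dist_comm (f (a j)) (f x)] at h1
    rw [hτ, div_le_iff₀ (by positivity), ← e]
    nlinarith
  have hdisj : ((Finset.range (m + 1) : Finset ℕ) : Set ℕ).PairwiseDisjoint
      fun j => Metric.ball (f (a j)) (τ / 2) := by
    intro i hi j hj hij
    have hi := Finset.mem_range.1 (Finset.mem_coe.1 hi)
    have hj := Finset.mem_range.1 (Finset.mem_coe.1 hj)
    refine Metric.ball_disjoint_ball ?_
    rw [add_halves]
    rcases lt_or_gt_of_ne hij with h | h
    · rw [dist_comm]; exact hsep i j h (by omega)
    · exact hsep j i h (by omega)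
  have hvol : ENNReal.ofReal ((m + 1) * (τ / 2) ^ 4) * c0 ≤
      ENNReal.ofReal ((2 * outer f x r) ^ 4) * c0 := by
    calc ENNReal.ofReal ((m + 1) * (τ / 2) ^ 4) * c0
        = ∑ j ∈ Finset.range (m + 1), volume (Metric.ball (f (a j)) (τ / 2)) := by
          simp only [volume_ball _ (by positivity : 0 ≤ τ / 2)]
          rw [Finset.sum_const, Finset.card_range, nsmul_eq_mul, ← mul_assoc,
            ENNReal.ofReal_mul (by positivity)]
          congr 2
          rw [← Nat.cast_succ, ENNReal.ofReal_natCast]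
      _ = volume (⋃ j ∈ Finset.range (m + 1), Metric.ball (f (a j)) (τ / 2)) :=
          (measure_biUnion_finset hdisj fun j _ => measurableSet_ball).symm
      _ ≤ volume (Metric.ball (f x) (2 * outer f x r)) := by
          refine measure_mono (iUnion₂_subset fun j _ p hp => ?_)
          have h1 := dist_le_outer f (r := r) (by
            rw [hxa j]; exact div_le_self hr.le (one_le_pow₀ (by norm_num)))
          rw [Metric.mem_ball'] at *
          linarith [dist_triangle (f x) (f (a j)) p]
      _ = _ := volume_ball _ (by have := outer_nonneg f x hr.le; positivity)
  have ho := outer_nonneg f x hr.le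
  rw [ENNReal.mul_le_mul_iff_left c0_pos.ne' c0_lt_top.ne,
    ENNReal.ofReal_le_ofReal_iff (by positivity)] at hvol
  have e : outer f x (r / 2 ^ m) = τ * H ^ 2 := by rw [hτ]; field_simp
  rw [e]
  calc (m + 1) * (τ * H ^ 2) ^ 4 = ((m + 1) * (τ / 2) ^ 4) * (2 * H ^ 2) ^ 4 := by ring
    _ ≤ (2 * outer f x r) ^ 4 * (2 * H ^ 2) ^ 4 := by gcongr
    _ = _ := by ring

lemma WeakQS.exists_contraction (hf : WeakQS f H) (hH : 1 ≤ H) :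
    ∃ m : ℕ, ∀ (x : KH) (r : ℝ), 0 < r → outer f x (r / 2 ^ m) ≤ outer f x r / (2 * H) := by
  obtain ⟨m, hm⟩ := exists_nat_gt ((8 * H ^ 3) ^ 4)
  refine ⟨m, fun x r hr => ?_⟩
  have h := hf.outer_div_pow_le hH x hr m
  have ho := outer_nonneg f x hr.le
  have ho' := outer_nonneg f x (by positivity : 0 ≤ r / 2 ^ m)
  have h2 : (8 * H ^ 3 * outer f x (r / 2 ^ m)) ^ 4 ≤ (4 * H ^ 2 * outer f x r) ^ 4 := by
    refine le_trans ?_ h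
    rw [mul_pow]
    gcongr
    linarith
  have h3 := le_of_pow_le_pow_left₀ (by norm_num) (by positivity) h2
  rw [le_div_iff₀ (by positivity)]
  have : 0 < 4 * H ^ 2 := by positivity
  refine le_of_mul_le_mul_left ?_ this
  linarith

/-- The mean oscillation of a weakly quasisymmetric map is comparable to its oscillation. -/
lemma WeakQS.le_lintegral (hf : WeakQS f H) (hH : 1 ≤ H) {m : ℕ} {x : KH} {r : ℝ} (hr : 0 < r)
    (hm : outer f x (r / 2 ^ m) ≤ outer f x r / (2 * H)) :
    ENNReal.ofReal ((r / 2 ^ m) ^ 4 * (r / 2) ^ 4 * (outer f x r / (2 * H))) * c0 ^ 2 ≤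
      ∫⁻ p in Metric.ball x (2 * r), ∫⁻ q in Metric.ball x (2 * r),
        ENNReal.ofReal |dist (f x) (f p) - dist (f x) (f q)| := by
  have hrm : 0 < r / 2 ^ m := by positivity
  have hrm' : r / 2 ^ m ≤ r := div_le_self hr.le (one_le_pow₀ (by norm_num))
  have ho := outer_nonneg f x hr.le
  set z := x * mk (3 * r / 2) 0 0 with hz
  have hxz : dist x z = 3 * r / 2 := by rw [hz, dist_mul_self, kn_mk_x, abs_of_pos (by positivity)]
  have h1 : Metric.ball x (r / 2 ^ m) ⊆ Metric.ball x (2 * r) :=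
    Metric.ball_subset_ball (by linarith)
  have h2 : Metric.ball z (r / 2) ⊆ Metric.ball x (2 * r) := fun q hq => by
    rw [Metric.mem_ball'] at *
    linarith [dist_triangle x z q]
  refine le_trans ?_ (lintegral_mono_set h1)
  have hin : ∀ p ∈ Metric.ball x (r / 2 ^ m),
      ENNReal.ofReal (outer f x r / (2 * H)) * (ENNReal.ofReal ((r / 2) ^ 4) * c0) ≤
      ∫⁻ q in Metric.ball x (2 * r), ENNReal.ofReal |dist (f x) (f p) - dist (f x) (f q)| := by
    intro p hp
    refine le_trans ?_ (lintegral_mono_set h2)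
    rw [← volume_ball z (by positivity), ← setLIntegral_const]
    refine setLIntegral_mono_ae' measurableSet_ball (ae_of_all _ fun q hq => ?_)
    refine ENNReal.ofReal_le_ofReal ?_
    have hp' := (dist_le_outer f (Metric.mem_ball'.1 hp).le).trans hm
    obtain ⟨w, hw, e⟩ := exists_dist_eq_outer f x hr.le
    rw [Metric.mem_ball] at hq
    have hq' := hf x w q (by linarith [dist_triangle x q z])
    rw [e] at hq'
    have e2 : outer f x r / H = 2 * (outer f x r / (2 * H)) := by field_simp
    have hq'' : outer f x r / H ≤ dist (f x) (f q) := by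
      rw [div_le_iff₀ (by positivity)]; linarith
    rw [abs_sub_comm]
    refine le_trans ?_ (le_abs_self _)
    linarith
  refine le_trans (le_of_eq ?_) (setLIntegral_mono_ae' measurableSet_ball (ae_of_all _ hin))
  rw [setLIntegral_const, volume_ball _ hrm.le, ENNReal.ofReal_mul (by positivity),
    ENNReal.ofReal_mul (by positivity)]
  ring

end WeakQS

/-- The oscillations of a weakly quasisymmetric map on the balls of a cover are not too small. -/
lemma WeakQS.le_sum_osc {f : KH ≃ₜ KH} {H : ℝ} (hf : WeakQS f H) (hH : 1 ≤ H) {m : ℕ} {x : KH}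
    {r : ℝ} (hr : 0 < r) (hm : outer f x (r / 2 ^ m) ≤ outer f x r / (2 * H)) {I : Finset KH}
    {ρ o : KH → ℝ} (hI : OscData (fun p => dist (f x) (f p)) I ρ o (2 * r))
    (hcov : Metric.closedBall x (26 * r) ⊆ ⋃ i ∈ I, Metric.ball i (ρ i)) :
    1 / ((2 ^ m) ^ 4 * 16 * (2 * H) * 98304) * (r ^ 3 * outer f x r) ≤
      ∑ i ∈ I, o i * ρ i ^ 3 := by
  rw [show 26 * r = 13 * (2 * r) by ring] at hcov
  have hlow := (hf.le_lintegral hH hr hm).trans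
    (lintegral_lintegral_sub_le (continuous_const.dist f.continuous) (by positivity) hI x hcov)
  have hS0 : 0 ≤ ∑ i ∈ I, o i * ρ i ^ 3 := Finset.sum_nonneg fun i hi =>
    mul_nonneg (hI.nonneg i hi) (pow_nonneg (hI.pos i hi).le 3)
  rw [ENNReal.mul_le_mul_iff_left (pow_ne_zero 2 c0_pos.ne') (ENNReal.pow_ne_top c0_lt_top.ne),
    ENNReal.ofReal_le_ofReal_iff (by positivity)] at hlow
  have e : (r / 2 ^ m) ^ 4 * (r / 2) ^ 4 * (outer f x r / (2 * H)) = 98304 * r ^ 5 *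
      (1 / ((2 ^ m) ^ 4 * 16 * (2 * H) * 98304) * (r ^ 3 * outer f x r)) := by
    field_simp; ring
  rw [e] at hlow
  have hp : 0 < 98304 * r ^ 5 := by positivity
  refine le_of_mul_le_mul_left (hlow.trans (le_of_eq ?_)) hp
  ring

set_option maxHeartbeats 400000 in
/-- A compact null set cannot have an image which nearly fills a ball. -/
lemma WeakQS.exists_porosity {f : KH ≃ₜ KH} {H : ℝ} (hf : WeakQS f H) (hH : 1 ≤ H) :
    ∃ κ : ℝ, 0 < κ ∧ ∀ (x : KH) (r : ℝ) (E : Set KH), 0 < r → IsCompact E → volume E = 0 →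
      ENNReal.ofReal ((κ * outer f x (27 * r)) ^ 4) * c0 <
        volume ((f '' E)ᶜ ∩ Metric.closedBall (f x) (outer f x (27 * r))) := by
  classical
  obtain ⟨m, hm⟩ := hf.exists_contraction hH
  obtain ⟨C₅, hC₅pos, hC₅⟩ : ∃ C, 0 < C ∧ ∀ x r, 0 < r → outer f x r ≤ C * outer f x (r / 5) := by
    refine ⟨6 * (5 : ℕ) * (2 * H) ^ (6 * 5), by positivity, fun x r hr => ?_⟩
    have := hf.outer_mul_le hH x (by positivity : 0 < r / 5) 5
    rwa [Nat.cast_ofNat, mul_div_cancel₀ r (by norm_num : (5 : ℝ) ≠ 0)] at this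
  obtain ⟨C₂, hC₂pos, hC₂⟩ : ∃ C, 0 < C ∧ ∀ x r, 0 < r → outer f x (27 * r) ≤ C * outer f x r := by
    refine ⟨6 * (27 : ℕ) * (2 * H) ^ (6 * 27), by positivity, fun x r hr => ?_⟩
    exact_mod_cast hf.outer_mul_le hH x hr 27
  set P := 2 * C₅ * H with hP
  have hPpos : 0 < P := by positivity
  set c : ℝ := 1 / ((2 ^ m) ^ 4 * 16 * (2 * H) * 98304) with hc
  have hcpos : 0 < c := by positivity
  set D : ℝ := P * C₂ * 3000000 with hD
  have hDpos : 0 < D := by positivity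
  set κ := min 1 (c / (2 * D)) with hκ
  have hκpos : 0 < κ := lt_min one_pos (by positivity)
  have hκ1 : κ ≤ 1 := min_le_left _ _
  have hκD : D * κ < c := by
    have : κ ≤ c / (2 * D) := min_le_right _ _
    rw [le_div_iff₀ (by positivity)] at this
    linarith
  refine ⟨κ, hκpos, fun x r E hr hE hE0 => ?_⟩
  by_contra! hdens
  set s := outer f x (27 * r) with hs
  have hspos : 0 < s := outer_pos f x (by positivity)
  obtain ⟨δ, hδ, hδr, hthick⟩ : ∃ δ, 0 < δ ∧ δ ≤ r ∧
      volume (Metric.cthickening δ E) ≤ ENNReal.ofReal ((κ * r) ^ 4) * c0 := by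
    have h1 := tendsto_measure_cthickening_of_isCompact (μ := volume) hE
    rw [hE0] at h1
    have h2 : (0 : ℝ≥0∞) < ENNReal.ofReal ((κ * r) ^ 4) * c0 :=
      ENNReal.mul_pos (ENNReal.ofReal_pos.2 (by positivity)).ne' c0_pos.ne'
    have h3 := ((h1.mono_left nhdsWithin_le_nhds).eventually (gt_mem_nhds h2) :
      ∀ᶠ δ in 𝓝[>] (0 : ℝ), _)
    obtain ⟨δ, h4, h5⟩ := (h3.and (Ioc_mem_nhdsGT hr)).exists
    exact ⟨δ, h5.1, h5.2, h4.le⟩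
  obtain ⟨I, hIK, hd, hcov⟩ := exists_finset_cover (isCompact_closedBall x (26 * r))
    (fun _ => δ) (fun _ => hδ)
  set o : KH → ℝ := fun i => 2 * outer f i δ with ho
  have ho0 : ∀ i, 0 ≤ o i := fun i => by have := outer_nonneg f i hδ.le; simp only [ho]; positivity
  have hI : OscData (fun p => dist (f x) (f p)) I (fun _ => δ) o (2 * r) := by
    refine ⟨fun _ _ => hδ, fun _ _ => by linarith, fun i _ => ho0 i, fun i _ p hp q hq => ?_⟩
    have h1 := dist_le_outer f (Metric.mem_ball'.1 hp).le
    have h2 := dist_le_outer f (Metric.mem_ball'.1 hq).le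
    simp only [ho]
    rw [dist_comm (f x), dist_comm (f x)]
    refine (abs_dist_sub_le _ _ _).trans ?_
    linarith [dist_triangle_left (f p) (f q) (f i)]
  have hov : ∀ i, ENNReal.ofReal (o i ^ 4) * c0 ≤
      ENNReal.ofReal (P ^ 4) * volume (f '' Metric.closedBall i (δ / 5)) := by
    intro i
    have h1 := (hf.roundAt i (δ / 5)).le_volume (by positivity) (by positivity)
    refine le_trans ?_ (mul_le_mul_right h1 _)
    rw [← mul_assoc, ← ENNReal.ofReal_mul (by positivity), ← mul_pow]
    gcongr
    · exact ho0 i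
    · have h2 := hC₅ i δ hδ
      have e : P * (outer f i (δ / 5) / H) = 2 * (C₅ * outer f i (δ / 5)) := by
        rw [hP]; field_simp
      rw [e]
      simp only [ho]
      linarith
  have hin : ∀ i ∈ I, Metric.closedBall i (δ / 5) ⊆ Metric.closedBall x (27 * r) := by
    intro i hi p hp
    have := Metric.mem_closedBall.1 (hIK hi)
    rw [Metric.mem_closedBall] at *
    linarith [dist_triangle p i x]
  have hfin : ∀ i ∈ I, f '' Metric.closedBall i (δ / 5) ⊆ Metric.closedBall (f x) s := by
    rintro i hi _ ⟨p, hp, rfl⟩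
    rw [Metric.mem_closedBall']
    exact dist_le_outer f (Metric.mem_closedBall'.1 (hin i hi hp))
  set A := I.filter fun i => (Metric.closedBall i (δ / 5) ∩ E).Nonempty with hA
  set B := I.filter fun i => ¬ (Metric.closedBall i (δ / 5) ∩ E).Nonempty with hB
  have hAI : A ⊆ I := Finset.filter_subset _ _
  have hBI : B ⊆ I := Finset.filter_subset _ _
  have hAo : ∑ i ∈ A, o i ^ 4 ≤ (P * s) ^ 4 := by
    rw [mul_pow]
    exact sum_le_of_volume (f := f) (ρ := fun _ => δ / 5) (fun i _ => pow_nonneg (ho0 i) 4)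
      (hd.subset (Finset.coe_subset.2 hAI)) (by positivity) (by positivity)
      (volume_closedBall (f x) hspos.le).le (fun i hi => hfin i (hAI hi)) fun i _ => hov i
  have hBo : ∑ i ∈ B, o i ^ 4 ≤ (P * (κ * s)) ^ 4 := by
    rw [mul_pow]
    refine sum_le_of_volume (f := f) (ρ := fun _ => δ / 5) (fun i _ => pow_nonneg (ho0 i) 4)
      (hd.subset (Finset.coe_subset.2 hBI)) (by positivity) (by positivity)
      hdens (fun i hi => subset_inter ?_ (hfin i (hBI hi))) fun i _ => hov i
    rintro _ ⟨p, hp, rfl⟩ ⟨q, hq, hqp⟩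
    rw [f.injective hqp] at hq
    exact (Finset.mem_filter.1 hi).2 ⟨p, hp, hq⟩
  have hAr : ∑ i ∈ A, δ ^ 4 ≤ (5 * (κ * r)) ^ 4 := by
    refine sum_radii_le (r := fun _ => δ) (fun _ _ => hδ.le) (hd.subset (Finset.coe_subset.2 hAI))
      hthick fun i hi p hp => ?_
    obtain ⟨q, hq, hqE⟩ := (Finset.mem_filter.1 hi).2
    refine Metric.mem_cthickening_of_dist_le p q δ E hqE ?_
    rw [Metric.mem_closedBall] at hp hq
    linarith [dist_triangle_right p q i]
  have hBr : ∑ i ∈ B, δ ^ 4 ≤ (5 * (27 * r)) ^ 4 :=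
    sum_radii_le (r := fun _ => δ) (fun _ _ => hδ.le) (hd.subset (Finset.coe_subset.2 hBI))
      (volume_closedBall x (by positivity)).le fun i hi => hin i (hBI hi)
  have hAs := sum_mul_cube_le A o (fun _ => δ) (fun i _ => ho0 i) (fun _ _ => hδ.le)
    (by positivity) (by positivity) hAo hAr
  have hBs := sum_mul_cube_le B o (fun _ => δ) (fun i _ => ho0 i) (fun _ _ => hδ.le)
    (by positivity) (by positivity) hBo hBr
  have hsplit : ∑ i ∈ I, o i * δ ^ 3 = ∑ i ∈ A, o i * δ ^ 3 + ∑ i ∈ B, o i * δ ^ 3 :=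
    (Finset.sum_filter_add_sum_filter_not I _ _).symm
  have hκ3 : κ ^ 3 ≤ κ := pow_le_of_le_one hκpos.le hκ1 (by norm_num)
  have hupper : ∑ i ∈ I, o i * δ ^ 3 ≤ D * κ * (r ^ 3 * outer f x r) := by
    have hsC := hC₂ x r hr
    have ho' := outer_nonneg f x hr.le
    rw [← hs] at hsC
    calc ∑ i ∈ I, o i * δ ^ 3
        ≤ P * s * (5 * (κ * r)) ^ 3 + P * (κ * s) * (5 * (27 * r)) ^ 3 := by
          rw [hsplit]; exact add_le_add hAs hBs
      _ = P * s * r ^ 3 * (125 * κ ^ 3 + 2460375 * κ) := by ring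
      _ ≤ P * (C₂ * outer f x r) * r ^ 3 * (125 * κ + 2460375 * κ) := by gcongr
      _ ≤ P * (C₂ * outer f x r) * r ^ 3 * (3000000 * κ) := by
          gcongr
          linarith
      _ = _ := by rw [hD]; ring
  have hlow := hf.le_sum_osc hH hr (hm x r hr) hI hcov
  have hopos := outer_pos f x hr
  have hp : 0 < r ^ 3 * outer f x r := by positivity
  have := le_of_mul_le_mul_right (hlow.trans hupper) hp
  linarith

lemma WeakQS.volume_eq_zero_of_isCompact {f : KH ≃ₜ KH} {H : ℝ} (hf : WeakQS f H) (hH : 1 ≤ H)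
    {E : Set KH} (hE : IsCompact E) (hE0 : volume E = 0) : volume (f '' E) = 0 := by
  obtain ⟨κ, hκ, hpor⟩ := hf.exists_porosity hH
  by_contra hne
  have hmeas : MeasurableSet (f '' E) := (hE.image f.continuous).measurableSet
  have hae := (IsUnifLocDoublingMeasure.vitaliFamily (volume : Measure KH)
    1).ae_tendsto_measure_inter_div_of_measurableSet hmeas.compl
  obtain ⟨y, hy, hlim⟩ : ∃ y ∈ f '' E, Tendsto (fun a => volume ((f '' E)ᶜ ∩ a) / volume a)
      ((IsUnifLocDoublingMeasure.vitaliFamily (volume : Measure KH) 1).filterAt y)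
      (𝓝 ((f '' E)ᶜ.indicator 1 y)) := by
    by_contra! hcon
    exact hne (measure_mono_null hcon hae)
  obtain ⟨x, hxE, rfl⟩ := hy
  rw [indicator_of_notMem (by simpa using mem_image_of_mem f hxE)] at hlim
  have hballs := IsUnifLocDoublingMeasure.tendsto_closedBall_filterAt (K := 1) (x := f x)
    (volume : Measure KH) (fun _ : ℝ => f x) (fun s => s) (l := 𝓝[>] 0) tendsto_id
    (by filter_upwards [self_mem_nhdsWithin] with s hs
        exact Metric.mem_closedBall_self (by simpa using (le_of_lt hs)))
  have hev := (hlim.comp hballs).eventually (gt_mem_nhds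
    (ENNReal.ofReal_pos.2 (by positivity : 0 < κ ^ 4)))
  obtain ⟨s₀, hs₀, hsub⟩ := mem_nhdsGT_iff_exists_Ioo_subset.1 hev
  obtain ⟨δ, hδ, hmod⟩ := exists_modulus f.continuous (isCompact_singleton (x := x))
    (show 0 < s₀ from hs₀)
  set r := δ / 54 with hr
  have hrpos : 0 < r := by positivity
  have hspos : 0 < outer f x (27 * r) := outer_pos f x (by positivity)
  have hs : outer f x (27 * r) < s₀ := by
    obtain ⟨q, hq, e⟩ := exists_dist_eq_outer f x (by positivity : 0 ≤ 27 * r)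
    rw [← e]
    exact hmod x rfl q (by linarith)
  have h1 : volume ((f '' E)ᶜ ∩ Metric.closedBall (f x) (outer f x (27 * r))) /
      volume (Metric.closedBall (f x) (outer f x (27 * r))) < ENNReal.ofReal (κ ^ 4) :=
    hsub ⟨hspos, hs⟩
  refine absurd (hpor x r E hrpos hE hE0) (not_lt.2 ?_)
  have hv := volume_closedBall (f x) hspos.le
  rw [hv] at h1
  rw [mul_pow, ENNReal.ofReal_mul (by positivity), mul_assoc]
  refine (ENNReal.div_le_iff_le_mul (Or.inl ?_) (Or.inl ?_)).1 h1.le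
  · exact (ENNReal.mul_pos (ENNReal.ofReal_pos.2 (by positivity)).ne' c0_pos.ne').ne'
  · exact ENNReal.mul_ne_top ENNReal.ofReal_ne_top c0_lt_top.ne

/-- Lusin's condition (N) for weakly quasisymmetric maps. -/
theorem WeakQS.volume_image_eq_zero {f : KH ≃ₜ KH} {H : ℝ} (hf : WeakQS f H) (hH : 1 ≤ H)
    {E : Set KH} (hE0 : volume E = 0) : volume (f '' E) = 0 := by
  refine measure_mono_null (image_mono (subset_toMeasurable volume E)) ?_
  have hm : MeasurableSet (f '' toMeasurable volume E) :=
    f.toMeasurableEquiv.measurableEmbedding.measurableSet_image'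
      (measurableSet_toMeasurable _ _)
  by_contra hne
  obtain ⟨K, hKsub, hK, hKpos⟩ := hm.exists_lt_isCompact (pos_iff_ne_zero.2 hne)
  have h1 : volume (f.symm '' K) = 0 := by
    refine measure_mono_null (t := toMeasurable volume E) ?_ ((measure_toMeasurable E).trans hE0)
    rintro _ ⟨y, hy, rfl⟩
    obtain ⟨p, hp, rfl⟩ := hKsub hy
    simpa using hp
  have h2 := hf.volume_eq_zero_of_isCompact hH (hK.image f.symm.continuous) h1
  rw [image_image] at h2
  simp only [f.apply_symm_apply, image_id'] at h2
  exact hKpos.ne' h2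

/-- A homeomorphism of `ℝ³`, seen as one of the metric space `KH`. -/
def ofHG (f : HG ≃ₜ HG) : KH ≃ₜ KH := f

lemma eventually_roundAt {f : HG ≃ₜ HG} {M : ℝ≥0} (hM : ∀ p, Heis.dilat f p ≤ M) (x : KH) :
    ∀ᶠ r in 𝓝[>] (0 : ℝ), RoundAt (ofHG f) (M + 1) x r := by
  have hlt : limsup (fun r : ℝ => (⨆ q ∈ {q | dist x q ≤ r},
      ENNReal.ofReal (dist (ofHG f x) (ofHG f q))) /
        (⨅ q ∈ {q | r ≤ dist x q}, ENNReal.ofReal (dist (ofHG f x) (ofHG f q)))) (𝓝[>] 0) <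
      ((M + 1 : ℝ≥0) : ℝ≥0∞) :=
    (hM x).trans_lt (by exact_mod_cast lt_add_one M)
  filter_upwards [eventually_lt_of_limsup_lt hlt] with r hr q q' hq hq'
  have h1 := (ENNReal.div_le_iff_le_mul (Or.inr ENNReal.coe_ne_top)
    (Or.inr (by positivity))).1 hr.le
  have h2 : ENNReal.ofReal (dist (ofHG f x) (ofHG f q)) ≤
      ((M + 1 : ℝ≥0) : ℝ≥0∞) * ENNReal.ofReal (dist (ofHG f x) (ofHG f q')) :=
    (le_iSup₂_of_le (f := fun q (_ : q ∈ {q | dist x q ≤ r}) =>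
      ENNReal.ofReal (dist (ofHG f x) (ofHG f q))) q hq le_rfl).trans (h1.trans
      (mul_le_mul_right (iInf₂_le q' hq') _))
  rw [← ENNReal.ofReal_coe_nnreal, ← ENNReal.ofReal_mul (NNReal.coe_nonneg _),
    ENNReal.ofReal_le_ofReal_iff (by positivity)] at h2
  exact_mod_cast h2

/-- Quasiconformal maps of the Heisenberg group satisfy Lusin's condition (N). -/
theorem volume_image_eq_zero {f : HG ≃ₜ HG} (hf : Heis.IsQC f) {E : Set KH}
    (hE : volume E = 0) : volume (ofHG f '' E) = 0 := by
  obtain ⟨M, hM⟩ := hf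
  obtain ⟨H, hH, hqs⟩ := exists_weak_quasisymmetry (M := M + 1) (by positivity)
    (eventually_roundAt hM)
  exact WeakQS.volume_image_eq_zero hqs hH hE

/-- The volume of the image, as a measure. -/
def pull (f : HG ≃ₜ HG) : Measure KH := Measure.map (ofHG f).symm volume

lemma pull_apply (f : HG ≃ₜ HG) (s : Set KH) : pull f s = volume (ofHG f '' s) := by
  have h := (ofHG f).symm.toMeasurableEquiv.map_apply (μ := volume) s
  rw [pull]
  refine h.trans (congrArg volume ?_)
  exact ((ofHG f).image_eq_preimage_symm s).symm

instance (f : HG ≃ₜ HG) : IsFiniteMeasureOnCompacts (pull f) :=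
  ⟨fun K hK => by rw [pull_apply]; exact (hK.image (ofHG f).continuous).measure_lt_top⟩

variable {f : HG ≃ₜ HG}

lemma pull_absolutelyContinuous (hf : Heis.IsQC f) : pull f ≪ volume :=
  Measure.AbsolutelyContinuous.mk fun s _ hs => by
    rw [pull_apply]; exact volume_image_eq_zero hf hs

lemma pull_ball (hf : Heis.IsQC f) (x : KH) {r : ℝ} (hr : 0 ≤ r) :
    pull f (Metric.ball x r) = pull f (Metric.closedBall x r) := by
  refine measure_congr ((pull_absolutelyContinuous hf).ae_eq ?_)
  refine ae_eq_of_subset_of_measure_ge Metric.ball_subset_closedBall ?_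
    measurableSet_ball.nullMeasurableSet measure_closedBall_lt_top.ne
  rw [volume_ball x hr, volume_closedBall x hr]

lemma jac_eq (x : KH) : Heis.jac f x =
    limsup (fun r : ℝ => pull f (Metric.ball x r) / volume (Metric.ball x r)) (𝓝[>] 0) := by
  have hb : ∀ r, Heis.ball x r = Metric.ball x r := fun r => by
    ext q; exact (Metric.mem_ball' (x := x) (y := q)).symm
  simp only [pull_apply]
  simp only [← hb]
  rfl

/-- The Jacobian is the density of the pulled back volume. -/
lemma jac_ae_eq_rnDeriv (hf : Heis.IsQC f) :
    (fun x : KH => Heis.jac f x) =ᵐ[volume] (pull f).rnDeriv volume := by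
  filter_upwards [(IsUnifLocDoublingMeasure.vitaliFamily (volume : Measure KH)
    1).ae_tendsto_rnDeriv (pull f)] with x hx
  have hballs := IsUnifLocDoublingMeasure.tendsto_closedBall_filterAt (K := 1) (x := x)
    (volume : Measure KH) (fun _ : ℝ => x) (fun s => s) (l := 𝓝[>] 0) tendsto_id
    (by filter_upwards [self_mem_nhdsWithin] with s hs
        exact Metric.mem_closedBall_self (by simpa using (le_of_lt hs)))
  rw [jac_eq]
  refine Tendsto.limsup_eq ((hx.comp hballs).congr' ?_)
  filter_upwards [self_mem_nhdsWithin] with r hr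
  have hr : 0 < r := hr
  simp only [Function.comp]
  rw [pull_ball hf x hr.le, volume_ball x hr.le, volume_closedBall x hr.le]

lemma aemeasurable_jac (hf : Heis.IsQC f) : AEMeasurable (Heis.jac f) volume :=
  (⟨_, Measure.measurable_rnDeriv _ _, jac_ae_eq_rnDeriv hf⟩ :
    AEMeasurable (fun x : KH => Heis.jac f x) volume)

/-- Change of variables. -/
lemma lintegral_mul_jac (hf : Heis.IsQC f) {ξ : HG → ℝ≥0∞} (hξ : Measurable ξ) :
    ∫⁻ p, ξ p * Heis.jac f p = ∫⁻ p, ξ (f.symm p) := by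
  have h1 : ∫⁻ p : KH, ξ p * Heis.jac f p = ∫⁻ p : KH, (pull f).rnDeriv volume p * ξ p :=
    lintegral_congr_ae (by
      filter_upwards [jac_ae_eq_rnDeriv hf] with p hp
      rw [mul_comm, hp])
  have hξ' : Measurable (fun p : KH => ξ p) := hξ
  refine h1.trans ?_
  rw [lintegral_rnDeriv_mul (pull_absolutelyContinuous hf) hξ'.aemeasurable]
  exact lintegral_map hξ' (ofHG f).symm.continuous.measurable

end KH

theorem stmt5 (fs : ℕ → HG ≃ₜ HG) (f : HG ≃ₜ HG)
    (hqc : ∀ m, Heis.IsQC (fs m)) (hf : Heis.IsQC f)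
    (hconv : Heis.ConvLocUnif (fun m => fs m) f)
    (hinv : ∀ p : HG, Tendsto (fun m => (fs m).symm p) atTop (𝓝 (f.symm p)))
    (ξ : HG → ℝ) (hξ : ContDiff ℝ (⊤ : ℕ∞) ξ) (hξc : HasCompactSupport ξ) (hξ0 : ∀ p, 0 ≤ ξ p) :
    -- the integrals exist and are finite
    (∀ m, AEMeasurable (Heis.jac (fs m)) volume ∧
      ∫⁻ p, ENNReal.ofReal (ξ p) * Heis.jac (fs m) p < ⊤) ∧
    (AEMeasurable (Heis.jac f) volume ∧ ∫⁻ p, ENNReal.ofReal (ξ p) * Heis.jac f p < ⊤) ∧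
    -- and they converge
    Tendsto (fun m => ∫⁻ p, ENNReal.ofReal (ξ p) * Heis.jac (fs m) p) atTop
      (𝓝 (∫⁻ p, ENNReal.ofReal (ξ p) * Heis.jac f p)) := by
  have hcont : Continuous fun p => ENNReal.ofReal (ξ p) :=
    ENNReal.continuous_ofReal.comp hξ.continuous
  obtain ⟨C, hC⟩ := hξ.continuous.bounded_above_of_compact_support hξc
  have hbound : ∀ (g : HG ≃ₜ HG) (K : Set HG), g '' tsupport ξ ⊆ K →
      ∀ p, ENNReal.ofReal (ξ (g.symm p)) ≤ K.indicator (fun _ => ENNReal.ofReal C) p := by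
    intro g K hK p
    by_cases hp : g.symm p ∈ tsupport ξ
    · rw [indicator_of_mem (hK ⟨_, hp, g.apply_symm_apply p⟩)]
      exact ENNReal.ofReal_le_ofReal ((le_abs_self _).trans (hC _))
    · rw [image_eq_zero_of_notMem_tsupport hp]
      simp
  have hfinK : ∀ K : Set HG, IsCompact K →
      ∫⁻ p, K.indicator (fun _ => ENNReal.ofReal C) p ≠ ⊤ := by
    intro K hK
    rw [lintegral_indicator hK.measurableSet, setLIntegral_const]
    exact ENNReal.mul_ne_top ENNReal.ofReal_ne_top hK.measure_lt_top.ne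
  have hfin : ∀ g : HG ≃ₜ HG, Heis.IsQC g → AEMeasurable (Heis.jac g) volume ∧
      ∫⁻ p, ENNReal.ofReal (ξ p) * Heis.jac g p < ⊤ := by
    intro g hg
    refine ⟨KH.aemeasurable_jac hg, ?_⟩
    rw [KH.lintegral_mul_jac hg hcont.measurable]
    exact (lintegral_mono (hbound g _ subset_rfl)).trans_lt
      (hfinK _ (hξc.isCompact.image g.continuous)).lt_top
  refine ⟨fun m => hfin _ (hqc m), hfin f hf, ?_⟩
  simp only [fun m => KH.lintegral_mul_jac (hqc m) hcont.measurable,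
    KH.lintegral_mul_jac hf hcont.measurable]
  obtain ⟨K, hK, hev⟩ : ∃ K : Set HG, IsCompact K ∧
      ∀ᶠ m in atTop, fs m '' tsupport ξ ⊆ K := by
    have hfK : IsCompact (X := KH) (f '' tsupport ξ) := hξc.isCompact.image f.continuous
    refine ⟨Metric.cthickening (α := KH) 1 (f '' tsupport ξ), hfK.cthickening, ?_⟩
    filter_upwards [hconv _ hξc.isCompact 1 one_pos] with m hm
    rintro _ ⟨p, hp, rfl⟩
    exact Metric.mem_cthickening_of_dist_le (α := KH) (fs m p) (f p) 1 _
      (mem_image_of_mem _ hp) (hm p hp).le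
  refine tendsto_lintegral_filter_of_dominated_convergence
    (K.indicator fun _ => ENNReal.ofReal C) ?_ ?_ (hfinK K hK) ?_
  · exact Eventually.of_forall fun m => (hcont.comp (fs m).symm.continuous).measurable
  · filter_upwards [hev] with m hm
    exact ae_of_all _ (hbound (fs m) K hm)
  · exact ae_of_all _ fun p => (hcont.tendsto _).comp (hinv p)

end
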